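/- arXiv:math/0403300 — 5 statements merged into one kernel-verified Lean document; each statement's English description precedes it below -/
import Mathlib

section
/- For generic (q0, q1, q2) ∈ ℂ³ — i.e., for all (q0, q1, q2) in some nonempty Zariski-open subset of ℂ³ — the quotient ring ℂ[E1,E2,H] / (E1·E2 + 2·E2·q0 − 2·H·q0 − 2·q0·q2, E1² − 2·E1·H + H² − E1·q1, E2² − 3·E2·H + 2·H² − E2·q2) is a semisimple commutative ℂ-algebra of ℂ-dimension 8, i.e., it is isomorphic as a ℂ-algebra to ℂ⁸. (This ring is the specialization at (q0,q1,q2) of the small quantum cohomology ring of the Fano threefold M³₁₈, the blow-up of ℙ³ along the disjoint union of a line and a conic.) -/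
/-!
Write `(p, q, r) = (q0, q1, q2)`. Putting `T = (E1 - H) / q` turns the second relation into
`E1 = q T²`, `H = q T² - q T`, and the first reads `(E1 + 2p) E2 = 2p (H + r)`. Multiplying the third
relation by `(E1 + 2p)²` then leaves a degree-`8` equation for `T` alone, namely
`specPoly p q r = 0` (`specPoly_aeval_eq_zero`). If `p ≠ 0` and `(r - 2p)² + 2pq ≠ 0`, the element
`E1 + 2p` is a unit modulo this polynomial (`specPoly_isCoprime_denom`), so `E2` is a polynomial
in `T` as well: for `q ≠ 0` the quotient ring is `ℂ[T]` modulo `specPoly`. When the latter is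
separable, evaluation at its eight roots is the isomorphism with `ℂ⁸` (`qh_equiv_of_separable`).

The open set is cut out by `p`, `q`, `(r - 2p)² + 2pq` and the resultant of `specPoly` with its
derivative. This resultant is not identically zero, because `specPoly` is separable at the point
`(1, -1, 1)` (`specPoly_isCoprime_sample`).
-/

open MvPolynomial

set_option maxHeartbeats 1000000

/-- The degree-`8` polynomial satisfied by `T = (E1 - H) / q1` at `(q0, q1, q2) = (p, q, r)`. With
`a = q T²` and `h = q T² - q T` it is `(h (a + p) (h a - 4 p r) - p r² a) / q`. It is defined over
any commutative ring so that its discriminant can be formed with `p, q, r` as indeterminates. -/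
noncomputable def specPoly {R : Type*} [CommRing R] (p q r : R) : Polynomial R :=
  Polynomial.C (q ^ 3) * Polynomial.X ^ 8
    + Polynomial.C (-2 * q ^ 3) * Polynomial.X ^ 7
    + Polynomial.C (q ^ 3 + p * q ^ 2) * Polynomial.X ^ 6
    + Polynomial.C (-2 * p * q ^ 2) * Polynomial.X ^ 5
    + Polynomial.C (p * q ^ 2 - 4 * p * r * q) * Polynomial.X ^ 4
    + Polynomial.C (4 * p * r * q) * Polynomial.X ^ 3
    + Polynomial.C (-4 * p ^ 2 * r - p * r ^ 2) * Polynomial.X ^ 2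
    + Polynomial.C (4 * p ^ 2 * r) * Polynomial.X

theorem specPoly_map {R S : Type*} [CommRing R] [CommRing S] (φ : R →+* S) (p q r : R) :
    (specPoly p q r).map φ = specPoly (φ p) (φ q) (φ r) := by
  simp [specPoly, map_ofNat]

theorem specPoly_natDegree_le {R : Type*} [CommRing R] (p q r : R) :
    (specPoly p q r).natDegree ≤ 8 := by
  unfold specPoly; compute_degree

theorem specPoly_coeff {R : Type*} [CommRing R] (p q r : R) :
    (specPoly p q r).coeff 8 = q ^ 3 := by
  simp [specPoly, -map_sub, -map_add, -map_mul, -map_neg, -map_pow,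
    Polynomial.coeff_C_mul, Polynomial.coeff_X_pow]

theorem specPoly_natDegree {R : Type*} [CommRing R] [IsDomain R] {p q r : R} (hq : q ≠ 0) :
    (specPoly p q r).natDegree = 8 :=
  Polynomial.natDegree_eq_of_le_of_coeff_ne_zero (specPoly_natDegree_le p q r)
    (by rw [specPoly_coeff]; exact pow_ne_zero 3 hq)

theorem specPoly_derivative_natDegree_le {R : Type*} [CommRing R] (p q r : R) :
    (Polynomial.derivative (specPoly p q r)).natDegree ≤ 7 :=
  (Polynomial.natDegree_derivative_le _).trans
    (Nat.sub_le_sub_right (specPoly_natDegree_le p q r) 1)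

theorem specPoly_aeval {A : Type*} [CommRing A] [Algebra ℂ A] (p q r : ℂ) (T : A) :
    Polynomial.aeval T (specPoly p q r) =
      algebraMap ℂ A q ^ 3 * T ^ 8 - 2 * algebraMap ℂ A q ^ 3 * T ^ 7
      + (algebraMap ℂ A q ^ 3 + algebraMap ℂ A p * algebraMap ℂ A q ^ 2) * T ^ 6
      - 2 * algebraMap ℂ A p * algebraMap ℂ A q ^ 2 * T ^ 5
      + (algebraMap ℂ A p * algebraMap ℂ A q ^ 2
          - 4 * algebraMap ℂ A p * algebraMap ℂ A r * algebraMap ℂ A q) * T ^ 4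
      + 4 * algebraMap ℂ A p * algebraMap ℂ A r * algebraMap ℂ A q * T ^ 3
      - (4 * algebraMap ℂ A p ^ 2 * algebraMap ℂ A r
          + algebraMap ℂ A p * algebraMap ℂ A r ^ 2) * T ^ 2
      + 4 * algebraMap ℂ A p ^ 2 * algebraMap ℂ A r * T := by
  simp [specPoly, map_ofNat]
  ring

theorem specPoly_eval (p q r t : ℂ) :
    (specPoly p q r).eval t =
      q ^ 3 * t ^ 8 - 2 * q ^ 3 * t ^ 7 + (q ^ 3 + p * q ^ 2) * t ^ 6
      - 2 * p * q ^ 2 * t ^ 5 + (p * q ^ 2 - 4 * p * r * q) * t ^ 4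
      + 4 * p * r * q * t ^ 3 - (4 * p ^ 2 * r + p * r ^ 2) * t ^ 2
      + 4 * p ^ 2 * r * t := by
  simpa using specPoly_aeval p q r t

/-- An explicit Bézout relation (from the Euclidean algorithm over `ℚ`) at the point `(1, -1, 1)`;
it is what makes the discriminant of `specPoly` a nonzero polynomial in `p, q, r`. -/
theorem specPoly_isCoprime_sample :
    IsCoprime (specPoly (1 : ℂ) (-1) 1) (Polynomial.derivative (specPoly (1 : ℂ) (-1) 1)) := by
  -- Bézout coefficients scaled by their common denominator `593512` (up to sign)
  let U : Polynomial ℂ := 594552 * Polynomial.X ^ 6 + 543614 * Polynomial.X ^ 5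
    + 92756 * Polynomial.X ^ 4 + 106998 * Polynomial.X ^ 3
    - 49952 * Polynomial.X ^ 2 - 1186372 * Polynomial.X - 477970
  let V : Polynomial ℂ := -74319 * Polynomial.X ^ 7 - 49372 * Polynomial.X ^ 6
    + 37908 * Polynomial.X ^ 5 + 20414 * Polynomial.X ^ 4
    + 180327 * Polynomial.X ^ 3 + 411338 * Polynomial.X ^ 2
    + 107025 * Polynomial.X - 148378
  have hP : specPoly (1 : ℂ) (-1) 1 = -Polynomial.X ^ 8 + 2 * Polynomial.X ^ 7
      - 2 * Polynomial.X ^ 5 + 5 * Polynomial.X ^ 4 - 4 * Polynomial.X ^ 3 - 5 * Polynomial.X ^ 2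
      + 4 * Polynomial.X := by
    norm_num [specPoly, map_ofNat]
    ring
  have hD : Polynomial.derivative (specPoly (1 : ℂ) (-1) 1) = -8 * Polynomial.X ^ 7
      + 14 * Polynomial.X ^ 6 - 10 * Polynomial.X ^ 4 + 20 * Polynomial.X ^ 3
      - 12 * Polynomial.X ^ 2 - 10 * Polynomial.X + 4 := by
    rw [hP]
    simp [map_ofNat]
    ring
  have h : U * specPoly (1 : ℂ) (-1) 1
      + V * Polynomial.derivative (specPoly (1 : ℂ) (-1) 1) = -593512 := by
    rw [hD, hP]
    simp only [U, V]
    ring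
  refine ⟨Polynomial.C (-1 / 593512) * U, Polynomial.C (-1 / 593512) * V, ?_⟩
  have hC : (-593512 : Polynomial ℂ) = Polynomial.C (-593512) := by
    rw [Polynomial.C_neg, ← map_ofNat (Polynomial.C : ℂ →+* _)]
  rw [mul_assoc, mul_assoc, ← mul_add, h, hC, ← Polynomial.C_mul]
  norm_num

/-- For nonzero `p` the polynomial `q t² + 2p` (that is, `E1 + 2 q0`) shares no root with
`specPoly` off the locus `(r - 2p)² + 2pq = 0`, so it is a unit modulo `specPoly`. -/
theorem specPoly_isCoprime_denom {p q r : ℂ} (hp : p ≠ 0)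
    (hc : (r - 2 * p) ^ 2 + 2 * p * q ≠ 0) :
    IsCoprime (Polynomial.C q * Polynomial.X ^ 2 + Polynomial.C (2 * p)) (specPoly p q r) := by
  rw [Polynomial.isCoprime_iff_aeval_ne_zero_of_isAlgClosed ℂ ℂ]
  intro t
  by_contra! hcon
  obtain ⟨hw, hP⟩ := hcon
  rw [Polynomial.coe_aeval_eq_eval] at hw hP
  rw [specPoly_eval] at hP
  have hw' : q * t ^ 2 + 2 * p = 0 := by simpa using hw
  have hh : 2 * p ^ 2 * (q * t ^ 2 - q * t + r) ^ 2 = 0 := by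
    linear_combination q * hP
      - ((q * t ^ 2 - q * t) * ((q * t ^ 2 - q * t) * (q * t ^ 2) - 4 * p * r)
        - p * (q * t ^ 2 - q * t) ^ 2 - p * r ^ 2) * hw'
  have hh' : q * t ^ 2 - q * t + r = 0 := by simpa [hp] using hh
  apply hc
  linear_combination q * hw' - (r - 2 * p + q * t) * (hw' - hh')

/-- `T` is a root of `specPoly` in any algebra where the relations hold. The hypotheses `ha`, `hh` are
the second relation solved for `a = E1` and `h = H`; `h1` and `h3` are the first and third. -/
theorem specPoly_aeval_eq_zero {A : Type*} [CommRing A] [Algebra ℂ A] {p q r : ℂ} (hq : q ≠ 0)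
    {a b h T : A} (ha : a = algebraMap ℂ A q * T ^ 2)
    (hh : h = algebraMap ℂ A q * T ^ 2 - algebraMap ℂ A q * T)
    (h1 : (a + 2 * algebraMap ℂ A p) * b = 2 * algebraMap ℂ A p * (h + algebraMap ℂ A r))
    (h3 : (b - h) * (b - 2 * h) = algebraMap ℂ A r * b) :
    Polynomial.aeval T (specPoly p q r) = 0 := by
  have hu : IsUnit (2 * algebraMap ℂ A q) := by
    have : 2 * algebraMap ℂ A q = algebraMap ℂ A (2 * q) := by rw [map_mul, map_ofNat]
    rw [this]
    exact (IsUnit.mk0 (2 * q) (by simpa using hq)).map _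
  refine hu.mul_left_cancel ?_
  rw [mul_zero, specPoly_aeval]
  generalize algebraMap ℂ A p = p at *
  generalize algebraMap ℂ A q = q at *
  generalize algebraMap ℂ A r = r at *
  -- the third relation times `(a + 2 * p) ^ 2`, with `b` eliminated through `h1`
  have e : (2 * p * (h + r) - h * (a + 2 * p)) * (2 * p * (h + r) - 2 * h * (a + 2 * p))
      - 2 * p * r * (h + r) * (a + 2 * p) = 0 := by
    rw [← h1]
    linear_combination (a + 2 * p) ^ 2 * h3 + r * (a + 2 * p) * h1
  rw [ha, hh] at e
  linear_combination e

/-- Under the nondegeneracy conditions, evaluation at the eight roots of `specPoly` identifies the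
quotient with `ℂ⁸`. -/
theorem qh_equiv_of_separable {p q r : ℂ} (hp : p ≠ 0) (hq : q ≠ 0) (hc : (r - 2 * p) ^ 2 + 2 * p * q ≠ 0)
    (hsep : (specPoly p q r).Separable) :
    Nonempty
          ((MvPolynomial (Fin 3) ℂ ⧸ Ideal.span
            { X 0 * X 1 + C (2 * p) * X 1 - C (2 * p) * X 2 - C (2 * p * r),
              X 0 ^ 2 - C 2 * (X 0 * X 2) + X 2 ^ 2 - C q * X 0,
              X 1 ^ 2 - C 3 * (X 1 * X 2) + C 2 * X 2 ^ 2 - C r * X 1 })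
          ≃ₐ[ℂ] (Fin 8 → ℂ)) := by
  set I : Ideal (MvPolynomial (Fin 3) ℂ) := Ideal.span
            { X 0 * X 1 + C (2 * p) * X 1 - C (2 * p) * X 2 - C (2 * p * r),
              X 0 ^ 2 - C 2 * (X 0 * X 2) + X 2 ^ 2 - C q * X 0,
              X 1 ^ 2 - C 3 * (X 1 * X 2) + C 2 * X 2 ^ 2 - C r * X 1 } with hI
  obtain ⟨t, ht, hroot⟩ : ∃ t : Fin 8 → ℂ, Function.Injective t ∧
      ∀ i, (specPoly p q r).eval (t i) = 0 := by
    have hcard : Fintype.card ((specPoly p q r).rootSet ℂ) = 8 := by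
      rw [Polynomial.card_rootSet_eq_natDegree hsep (IsAlgClosed.splits _),
        specPoly_natDegree hq]
    let e := Fintype.equivFinOfCardEq hcard
    refine ⟨fun i => (e.symm i : ℂ), Subtype.val_injective.comp e.symm.injective, fun i => ?_⟩
    have := (Polynomial.mem_rootSet.1 (e.symm i).2).2
    simpa using this
  have hdvd : ∀ F : Polynomial ℂ, (∀ i, F.eval (t i) = 0) → specPoly p q r ∣ F := by
    intro F hF
    rw [← EuclideanDomain.mod_eq_zero]
    refine Polynomial.eq_zero_of_natDegree_lt_card_of_eval_eq_zero _ ht (fun i => ?_) ?_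
    · have h := congrArg (Polynomial.eval (t i)) (EuclideanDomain.div_add_mod F (specPoly p q r))
      simpa [hroot, hF] using h
    · rw [Fintype.card_fin, ← specPoly_natDegree (p := p) (r := r) hq]
      exact Polynomial.natDegree_mod_lt _ (by rw [specPoly_natDegree hq]; norm_num)
  -- `U` inverts `q T² + 2p`, that is `E1 + 2p`, modulo `specPoly`
  obtain ⟨U, V, hUV⟩ := specPoly_isCoprime_denom hp hc
  -- `E1`, `E2`, `H` written as polynomials in `T`
  let σ : MvPolynomial (Fin 3) ℂ →ₐ[ℂ] Polynomial ℂ := MvPolynomial.aeval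
    ![Polynomial.C q * Polynomial.X ^ 2,
      Polynomial.C (2 * p) * (Polynomial.C q * Polynomial.X ^ 2 - Polynomial.C q * Polynomial.X
        + Polynomial.C r) * U,
      Polynomial.C q * Polynomial.X ^ 2 - Polynomial.C q * Polynomial.X]
  have σ0 : σ (X 0) = Polynomial.C q * Polynomial.X ^ 2 := by simp [σ]
  have σ1 : σ (X 1) = Polynomial.C (2 * p) * (Polynomial.C q * Polynomial.X ^ 2
      - Polynomial.C q * Polynomial.X + Polynomial.C r) * U := by simp [σ]
  have σ2 : σ (X 2) = Polynomial.C q * Polynomial.X ^ 2 - Polynomial.C q * Polynomial.X := by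
    simp [σ]
  have σC : ∀ c, σ (C c) = Polynomial.C c := fun c => by simp [σ]
  let Φ : MvPolynomial (Fin 3) ℂ →ₐ[ℂ] (Fin 8 → ℂ) :=
    AlgHom.pi fun i => (Polynomial.aeval (t i)).comp σ
  have hΦ : ∀ f i, Φ f i = (σ f).eval (t i) := fun f i => by simp [Φ]
  -- the preimage is a Lagrange interpolant in `T = (E1 - H) / q`, whose values `t i` are distinct
  have hsurj : Function.Surjective Φ := by
    intro y
    refine ⟨Polynomial.aeval (C q⁻¹ * (X 0 - X 2)) (Lagrange.interpolate Finset.univ t y), ?_⟩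
    funext i
    rw [hΦ, ← Polynomial.aeval_algHom_apply, map_mul, map_sub, σ0, σ2, σC]
    have : Polynomial.C q⁻¹ * (Polynomial.C q * Polynomial.X ^ 2 -
        (Polynomial.C q * Polynomial.X ^ 2 - Polynomial.C q * Polynomial.X)) =
        (Polynomial.X : Polynomial ℂ) := by
      rw [sub_sub_cancel, ← mul_assoc, ← Polynomial.C_mul, inv_mul_cancel₀ hq]; simp
    rw [this, Polynomial.aeval_X_left_apply]
    exact Lagrange.eval_interpolate_at_node y ht.injOn (Finset.mem_univ i)
  have hle : I ≤ RingHom.ker Φ := by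
    rw [hI, Ideal.span_le]
    have hu : ∀ i, U.eval (t i) * (q * t i ^ 2 + 2 * p) = 1 := fun i => by
      simpa [hroot] using congrArg (Polynomial.eval (t i)) hUV
    rintro f (rfl | rfl | rfl) <;> rw [SetLike.mem_coe, RingHom.mem_ker] <;> funext i <;>
      rw [hΦ] <;> simp only [map_add, map_sub, map_mul, map_pow, σ0, σ1, σ2, σC] <;>
      simp only [Polynomial.eval_add, Polynomial.eval_sub, Polynomial.eval_mul,
        Polynomial.eval_pow, Polynomial.eval_C, Polynomial.eval_X, Pi.zero_apply] <;>
      have hu := hu i <;> have hr := hroot i <;> rw [specPoly_eval] at hr <;>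
      generalize t i = x at * <;> generalize Polynomial.eval x U = u at *
    · linear_combination 2 * p * (q * x ^ 2 - q * x + r) * hu
    · ring
    · have hw : q * x ^ 2 + 2 * p ≠ 0 := right_ne_zero_of_mul_eq_one hu
      have hu' : u = 1 / (q * x ^ 2 + 2 * p) := by field_simp; linear_combination hu
      rw [hu']
      field_simp
      linear_combination 2 * q * hr
  have hker : I = RingHom.ker Φ := by
    refine le_antisymm hle fun f hf => ?_
    have hf' : specPoly p q r ∣ σ f := hdvd _ fun i => by
      rw [← hΦ, (RingHom.mem_ker).1 hf]; rfl
    let π := Ideal.Quotient.mkₐ ℂ I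
    have hπ : ∀ g ∈ I, π g = 0 := fun g hg => Ideal.Quotient.eq_zero_iff_mem.2 hg
    have πC : ∀ c, π (C c) = algebraMap ℂ _ c := fun c => π.commutes c
    have h1 := hπ _ (Ideal.subset_span (Or.inl rfl))
    have h2 := hπ _ (Ideal.subset_span (Or.inr (Or.inl rfl)))
    have h3 := hπ _ (Ideal.subset_span (Or.inr (Or.inr rfl)))
    simp only [map_add, map_sub, map_mul, map_pow, πC, map_ofNat] at h1 h2 h3
    set a := π (X 0) with ha
    set b := π (X 1) with hb
    set h := π (X 2) with hh
    set T := algebraMap ℂ (MvPolynomial (Fin 3) ℂ ⧸ I) q⁻¹ * (a - h) with hT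
    have hqq : algebraMap ℂ (MvPolynomial (Fin 3) ℂ ⧸ I) q⁻¹ * algebraMap ℂ _ q = 1 := by
      rw [← map_mul, inv_mul_cancel₀ hq, map_one]
    have haT : a = algebraMap ℂ _ q * T ^ 2 := by
      rw [hT]
      linear_combination (-(a * (1 + algebraMap ℂ (MvPolynomial (Fin 3) ℂ ⧸ I) q⁻¹ *
        algebraMap ℂ _ q))) * hqq - algebraMap ℂ _ q *
        algebraMap ℂ (MvPolynomial (Fin 3) ℂ ⧸ I) q⁻¹ ^ 2 * h2
    have hhT : h = algebraMap ℂ _ q * T ^ 2 - algebraMap ℂ _ q * T := by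
      rw [← haT, hT]
      linear_combination (a - h) * hqq
    have hPT : Polynomial.aeval T (specPoly p q r) = 0 :=
      specPoly_aeval_eq_zero (b := b) hq haT hhT (by linear_combination h1)
        (by linear_combination h3)
    have hUT : Polynomial.aeval T U * (a + 2 * algebraMap ℂ _ p) = 1 := by
      have := congrArg (Polynomial.aeval T) hUV
      simpa [hPT, ← haT, map_ofNat] using this
    -- modulo `I`, every `f` equals the one-variable polynomial `σ f` at `T`, and `T` is a root
    -- of `specPoly`, which divides `σ f`
    have hcomp : π = (Polynomial.aeval T).comp σ := by
      refine MvPolynomial.algHom_ext fun j => ?_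
      fin_cases j
      · simp [σ0, ← haT, ha]
      · simp only [AlgHom.comp_apply, Fin.mk_one, σ1]
        simp [← hhT, ← hb, map_ofNat]
        linear_combination Polynomial.aeval T U * h1 - b * hUT
      · simp [σ2, ← hhT, hh]
    have : π f = 0 := by
      rw [hcomp]
      obtain ⟨G, hG⟩ := hf'
      simp [hG, hPT]
    exact Ideal.Quotient.eq_zero_iff_mem.1 this
  rw [hker]
  exact ⟨Ideal.quotientKerAlgEquivOfSurjective hsurj⟩

/-- Small quantum cohomology of the Fano threefold `M318` (the blow-up of `ℙ³` along the disjoint union of a line and a conic),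
specialized at `(q0, q1, q2)`: for generic `(q0, q1, q2) ∈ ℂ³` (i.e. on the nonempty
Zariski-open set where a nonzero polynomial `g` does not vanish) the quotient ring is
isomorphic as a `ℂ`-algebra to `ℂ⁸`, hence a semisimple commutative `ℂ`-algebra of
`ℂ`-dimension 8.  Here `E1 = X 0`, `E2 = X 1` and `H = X 2`. -/
theorem qh_M3_18_generically_semisimple :
    ∃ g : MvPolynomial (Fin 3) ℂ, g ≠ 0 ∧
      ∀ q0 q1 q2 : ℂ, eval ![q0, q1, q2] g ≠ 0 →
        Nonempty
          ((MvPolynomial (Fin 3) ℂ ⧸ Ideal.span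
            { X 0 * X 1 + C (2 * q0) * X 1 - C (2 * q0) * X 2 - C (2 * q0 * q2),
              X 0 ^ 2 - C 2 * (X 0 * X 2) + X 2 ^ 2 - C q1 * X 0,
              X 1 ^ 2 - C 3 * (X 1 * X 2) + C 2 * X 2 ^ 2 - C q2 * X 1 })
          ≃ₐ[ℂ] (Fin 8 → ℂ)) := by
  let Q : Polynomial (MvPolynomial (Fin 3) ℂ) := specPoly (X 0) (X 1) (X 2)
  have heval : ∀ p q r : ℂ, eval ![p, q, r] (Q.resultant (Polynomial.derivative Q) 8 7) =
      (specPoly p q r).resultant (Polynomial.derivative (specPoly p q r)) 8 7 := by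
    intro p q r
    rw [← Polynomial.resultant_map_map, ← Polynomial.derivative_map]
    have hQ : Q.map (eval ![p, q, r]) = specPoly p q r := by
      refine (specPoly_map _ _ _ _).trans ?_
      simp
    rw [hQ]
  refine ⟨X 0 * X 1 * ((X 2 - 2 * X 0) ^ 2 + 2 * X 0 * X 1) *
    Q.resultant (Polynomial.derivative Q) 8 7, fun h0 => ?_, fun p q r hg => ?_⟩
  · have h := congrArg (eval ![(1 : ℂ), -1, 1]) h0
    rw [map_mul, heval, map_zero, mul_eq_zero] at h
    rcases h with h | h
    · simp only [map_mul, map_add, map_sub, map_pow, map_ofNat, eval_X, Matrix.cons_val_zero,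
        Matrix.cons_val_one, Matrix.cons_val] at h
      norm_num at h
    · have hd : (Polynomial.derivative (specPoly (1 : ℂ) (-1) 1)).natDegree = 7 := by
        rw [Polynomial.natDegree_derivative, specPoly_natDegree (by norm_num)]
      have := Polynomial.resultant_ne_zero _ _ specPoly_isCoprime_sample
      rw [hd, specPoly_natDegree (by norm_num)] at this
      exact this h
  · rw [map_mul, heval] at hg
    obtain ⟨hg, hres⟩ := mul_ne_zero_iff.1 hg
    simp only [map_mul, map_add, map_sub, map_pow, map_ofNat, eval_X, Matrix.cons_val_zero,
      Matrix.cons_val_one, Matrix.cons_val, mul_ne_zero_iff] at hg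
    obtain ⟨⟨hp, hq⟩, hc⟩ := hg
    refine qh_equiv_of_separable hp hq hc ?_
    obtain ⟨u, v, -, -, huv⟩ := Polynomial.exists_mul_add_mul_eq_C_resultant
      (m := 8) (n := 7) _ _ (specPoly_natDegree_le p q r)
      (specPoly_derivative_natDegree_le p q r) (by simp)
    set c := (specPoly p q r).resultant (Polynomial.derivative (specPoly p q r)) 8 7
    refine ⟨Polynomial.C c⁻¹ * u, Polynomial.C c⁻¹ * v, ?_⟩
    rw [mul_assoc, mul_assoc, ← mul_add, mul_comm u, mul_comm v, huv, ← Polynomial.C_mul,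
      inv_mul_cancel₀ hres, Polynomial.C_1]
end

section
/- For generic (q0, q1, q2) ∈ ℂ³ — i.e., for all (q0, q1, q2) in some nonempty Zariski-open subset of ℂ³ — the quotient ring ℂ[E1,E2,H] / (E1·E2 + E1·q0 + E2·q0 − H·q0, E1² − E1·H + (1/2)·H² + (1/2)·E1·q0 + (1/2)·E2·q0 − (1/2)·H·q0 − E1·q1 − (1/2)·q0·q1 − (1/2)·q0·q2, E2² − E2·H + (1/2)·H² + (1/2)·E1·q0 + (1/2)·E2·q0 − (1/2)·H·q0 − (1/2)·q0·q1 − E2·q2 − (1/2)·q0·q2) is a semisimple commutative ℂ-algebra of ℂ-dimension 8, i.e., it is isomorphic as a ℂ-algebra to ℂ⁸. (This ring is the specialization at (q0,q1,q2) of the small quantum cohomology ring of the Fano threefold M³₂₀, the blow-up of the quadric Q³ along two disjoint lines.) -/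
/-!
Write `a, b, c` for `q0, q1, q2` and `x, y, z` for `E1, E2, H`. The algebra has dimension at most
`8` because the relations reduce every polynomial to a combination of
`1, x, y, z, xz, yz, z², z³` (`monomials_mem`, `finite_and_finrank_le`). Conversely, it maps onto
`ℂ⁸` as soon as the relations have eight distinct common zeros; a surjection onto a space of at
least the same dimension is an isomorphism.

The common zeros are found through their slope `r = y / x`. With `w = z - x - y` the first relation
is `x y = a w` and the difference of the other two is `(x - y) w = c y - b x`, so
`w = (c r - b) / (1 - r)` and `x² = a w / r`; the remaining relation is then linear in `x`, and
squaring it gives an octic in `r` (`slopePoly`). Away from a few hypersurfaces every simple root of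
this octic is the slope of a common zero (`exists_point`), so there are eight zeros with distinct
slopes where the resultant of the octic and its derivative does not vanish. That resultant is a
nonzero polynomial in `a, b, c`, since the octic is separable at `(-1, -1, 1)`.
-/


open MvPolynomial

set_option maxHeartbeats 4000000

/-! ### The dimension is at most eight -/

/-- The relations rewrite every product of one of the eight monomials
`1, x, y, z, xz, yz, z², z³` with a variable as a combination of the eight. The leading forms are
`xy`, `x² - xz + z²/2` and `y² - yz + z²/2`: in top degree they give `xz² = yz² = 0` and `z⁴ = 0`,
and the exact versions of these identities carry lower-order corrections. -/
lemma monomials_mem {A : Type*} [CommRing A] [Algebra ℂ A] (S : Submodule ℂ A)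
    (a b c η x y z : A) (hη : 2 * η = 1)
    (ha : a ∈ (algebraMap ℂ A).range) (hb : b ∈ (algebraMap ℂ A).range)
    (hc : c ∈ (algebraMap ℂ A).range) (hη' : η ∈ (algebraMap ℂ A).range)
    (h1 : x * y + a * x + a * y - a * z = 0)
    (h2 : x ^ 2 - x * z + η * z ^ 2 + η * a * x + η * a * y - η * a * z - b * x
      - η * a * b - η * a * c = 0)
    (h3 : y ^ 2 - y * z + η * z ^ 2 + η * a * x + η * a * y - η * a * z
      - η * a * b - c * y - η * a * c = 0)
    (m1 : 1 ∈ S) (mx : x ∈ S) (my : y ∈ S) (mz : z ∈ S) (mxz : x * z ∈ S) (myz : y * z ∈ S)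
    (mzz : z ^ 2 ∈ S) (mzzz : z ^ 3 ∈ S) :
    x * y ∈ S ∧ x ^ 2 ∈ S ∧ y ^ 2 ∈ S ∧ x * y * z ∈ S ∧ x * z ^ 2 ∈ S ∧ y * z ^ 2 ∈ S ∧
      x ^ 2 * z ∈ S ∧ y ^ 2 * z ∈ S ∧ x * z ^ 3 ∈ S ∧ y * z ^ 3 ∈ S ∧ z ^ 4 ∈ S := by
  have h2' : (2 : A) ∈ (algebraMap ℂ A).range := ⟨2, map_ofNat _ 2⟩
  have hS : ∀ t ∈ (algebraMap ℂ A).range, ∀ m ∈ S, t * m ∈ S := by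
    rintro _ ⟨t, rfl⟩ m hm
    rw [← Algebra.smul_def]
    exact S.smul_mem t hm
  have exy : x * y = a * (z - x - y) := by linear_combination h1
  have mxy : x * y ∈ S := by
    rw [exy]; exact hS a ha _ (S.sub_mem (S.sub_mem mz mx) my)
  have exx : x ^ 2 = x * z + η * (a * z - z ^ 2 - a * x - a * y + a * (b * 1) + a * (c * 1))
      + b * x := by linear_combination h2
  have mxx : x ^ 2 ∈ S := by
    rw [exx]
    repeat' first | assumption | apply S.add_mem | apply S.sub_mem | apply hS
  have eyy : y ^ 2 = y * z + η * (a * z - z ^ 2 - a * x - a * y + a * (b * 1) + a * (c * 1))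
      + c * y := by linear_combination h3
  have myy : y ^ 2 ∈ S := by
    rw [eyy]
    repeat' first | assumption | apply S.add_mem | apply S.sub_mem | apply hS
  have exxy : x ^ 2 * y = a * (x * z - x ^ 2 - x * y) := by linear_combination x * exy
  have mxxy : x ^ 2 * y ∈ S := by
    rw [exxy]
    repeat' first | assumption | apply S.add_mem | apply S.sub_mem | apply hS
  have exyy : x * y ^ 2 = a * (y * z - x * y - y ^ 2) := by linear_combination y * exy
  have mxyy : x * y ^ 2 ∈ S := by
    rw [exyy]
    repeat' first | assumption | apply S.add_mem | apply S.sub_mem | apply hS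
  have exyz : x * y * z = a * (z ^ 2 - x * z - y * z) := by linear_combination z * exy
  have mxyz : x * y * z ∈ S := by
    rw [exyz]
    repeat' first | assumption | apply S.add_mem | apply S.sub_mem | apply hS
  -- multiplying the relation with `x ^ 2` by `y` trades `y * z ^ 2` for multiples of `x * y`
  have eyzz : y * z ^ 2 = 2 * (x * y * z) - 2 * (x ^ 2 * y) - a * (x * y) - a * y ^ 2
      + a * (y * z) + 2 * (b * (x * y)) + a * (b * y) + a * (c * y) := by
    linear_combination 2 * y * exx + (a * z - z ^ 2 - a * x - a * y + a * b + a * c) * y * hη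
  have myzz : y * z ^ 2 ∈ S := by
    rw [eyzz]
    repeat' first | assumption | apply S.add_mem | apply S.sub_mem | apply hS
  have exzz : x * z ^ 2 = 2 * (x * y * z) - 2 * (x * y ^ 2) - a * (x * y) - a * x ^ 2
      + a * (x * z) + 2 * (c * (x * y)) + a * (b * x) + a * (c * x) := by
    linear_combination 2 * x * eyy + (a * z - z ^ 2 - a * x - a * y + a * b + a * c) * x * hη
  have mxzz : x * z ^ 2 ∈ S := by
    rw [exzz]
    repeat' first | assumption | apply S.add_mem | apply S.sub_mem | apply hS
  have exxz : x ^ 2 * z = x * z ^ 2 + η * (a * z ^ 2 - z ^ 3 - a * (x * z) - a * (y * z)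
      + a * (b * z) + a * (c * z)) + b * (x * z) := by linear_combination z * exx
  have mxxz : x ^ 2 * z ∈ S := by
    rw [exxz]
    repeat' first | assumption | apply S.add_mem | apply S.sub_mem | apply hS
  have eyyz : y ^ 2 * z = y * z ^ 2 + η * (a * z ^ 2 - z ^ 3 - a * (x * z) - a * (y * z)
      + a * (b * z) + a * (c * z)) + c * (y * z) := by linear_combination z * eyy
  have myyz : y ^ 2 * z ∈ S := by
    rw [eyyz]
    repeat' first | assumption | apply S.add_mem | apply S.sub_mem | apply hS
  have exxx : x ^ 3 = x ^ 2 * z + η * (a * (x * z) - x * z ^ 2 - a * x ^ 2 - a * (x * y)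
      + a * (b * x) + a * (c * x)) + b * x ^ 2 := by linear_combination x * exx
  have mxxx : x ^ 3 ∈ S := by
    rw [exxx]
    repeat' first | assumption | apply S.add_mem | apply S.sub_mem | apply hS
  have exzzz : x * z ^ 3 = 2 * (a * (z ^ 3 - x * z ^ 2 - y * z ^ 2))
      - 2 * (a * (y * z ^ 2 - x * y * z - y ^ 2 * z)) - a * (x * y * z) - a * (x ^ 2 * z)
      + a * (x * z ^ 2) + 2 * (c * (x * y * z)) + a * (b * (x * z)) + a * (c * (x * z)) := by
    linear_combination z * exzz + (2 * z ^ 2 - 2 * y * z) * exy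
  have mxzzz : x * z ^ 3 ∈ S := by
    rw [exzzz]
    repeat' first | assumption | apply S.add_mem | apply S.sub_mem | apply hS
  have eyzzz : y * z ^ 3 = 2 * (a * (z ^ 3 - x * z ^ 2 - y * z ^ 2))
      - 2 * (a * (x * z ^ 2 - x ^ 2 * z - x * y * z)) - a * (x * y * z) - a * (y ^ 2 * z)
      + a * (y * z ^ 2) + 2 * (b * (x * y * z)) + a * (b * (y * z)) + a * (c * (y * z)) := by
    linear_combination z * eyzz + (2 * z ^ 2 - 2 * x * z) * exy
  have myzzz : y * z ^ 3 ∈ S := by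
    rw [eyzzz]
    repeat' first | assumption | apply S.add_mem | apply S.sub_mem | apply hS
  have exxzz : x ^ 2 * z ^ 2 = 2 * (a * (x * z ^ 2 - x ^ 2 * z - x * y * z))
      - 2 * (a * (x * y * z - x ^ 2 * y - x * y ^ 2)) - a * (x ^ 2 * y) - a * x ^ 3
      + a * (x ^ 2 * z) + 2 * (c * (x ^ 2 * y)) + a * (b * x ^ 2) + a * (c * x ^ 2) := by
    linear_combination x * exzz + (2 * x * z - 2 * x * y) * exy
  have mxxzz : x ^ 2 * z ^ 2 ∈ S := by
    rw [exxzz]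
    repeat' first | assumption | apply S.add_mem | apply S.sub_mem | apply hS
  have ezzzz : z ^ 4 = 2 * (x * z ^ 3) - 2 * (x ^ 2 * z ^ 2) - a * (x * z ^ 2) - a * (y * z ^ 2)
      + a * z ^ 3 + 2 * (b * (x * z ^ 2)) + a * (b * z ^ 2) + a * (c * z ^ 2) := by
    linear_combination 2 * z ^ 2 * exx
      + (a * z - z ^ 2 - a * x - a * y + a * b + a * c) * z ^ 2 * hη
  have mzzzz : z ^ 4 ∈ S := by
    rw [ezzzz]
    repeat' first | assumption | apply S.add_mem | apply S.sub_mem | apply hS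
  exact ⟨mxy, mxx, myy, mxyz, mxzz, myzz, mxxz, myyz, mxzzz, myzzz, mzzzz⟩

lemma finite_and_finrank_le {A : Type*} [CommRing A] [Algebra ℂ A] (a b c η x y z : A)
    (hη : 2 * η = 1)
    (ha : a ∈ (algebraMap ℂ A).range) (hb : b ∈ (algebraMap ℂ A).range)
    (hc : c ∈ (algebraMap ℂ A).range) (hη' : η ∈ (algebraMap ℂ A).range)
    (h1 : x * y + a * x + a * y - a * z = 0)
    (h2 : x ^ 2 - x * z + η * z ^ 2 + η * a * x + η * a * y - η * a * z - b * x
      - η * a * b - η * a * c = 0)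
    (h3 : y ^ 2 - y * z + η * z ^ 2 + η * a * x + η * a * y - η * a * z
      - η * a * b - c * y - η * a * c = 0)
    (hgen : ∀ u : A, ∃ p : MvPolynomial (Fin 3) ℂ, aeval ![x, y, z] p = u) :
    Module.Finite ℂ A ∧ Module.finrank ℂ A ≤ 8 := by
  let v : Fin 8 → A := ![1, x, y, z, x * z, y * z, z ^ 2, z ^ 3]
  obtain ⟨S, hSdef⟩ : ∃ S, S = Submodule.span ℂ (Set.range v) := ⟨_, rfl⟩
  have hv : ∀ i, v i ∈ S := fun i => hSdef ▸ Submodule.subset_span ⟨i, rfl⟩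
  have m1 : 1 ∈ S := hv 0
  have mx : x ∈ S := hv 1
  have my : y ∈ S := hv 2
  have mz : z ∈ S := hv 3
  have mxz : x * z ∈ S := hv 4
  have myz : y * z ∈ S := hv 5
  have mzz : z ^ 2 ∈ S := hv 6
  have mzzz : z ^ 3 ∈ S := hv 7
  obtain ⟨mxy, mxx, myy, mxyz, mxzz, myzz, mxxz, myyz, mxzzz, myzzz, mzzzz⟩ :=
    monomials_mem S a b c η x y z hη ha hb hc hη' h1 h2 h3 m1 mx my mz mxz myz mzz mzzz
  have hmul : ∀ t : A, (∀ i, v i * t ∈ S) → ∀ u ∈ S, u * t ∈ S := by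
    intro t ht u hu
    have hle : S ≤ S.comap (LinearMap.mulRight ℂ t) := by
      conv_lhs => rw [hSdef]
      rw [Submodule.span_le]
      rintro _ ⟨i, rfl⟩
      exact ht i
    exact hle hu
  have hx : ∀ u ∈ S, u * x ∈ S := by
    refine hmul x fun i => ?_
    fin_cases i
    · simpa [v] using mx
    · simpa [v, ← pow_two] using mxx
    · simpa [v, mul_comm] using mxy
    · simpa [v, mul_comm] using mxz
    · convert mxxz using 1; simp [v]; ring
    · convert mxyz using 1; simp [v]; ring
    · convert mxzz using 1; simp [v]; ring
    · convert mxzzz using 1; simp [v]; ring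
  have hy : ∀ u ∈ S, u * y ∈ S := by
    refine hmul y fun i => ?_
    fin_cases i
    · simpa [v] using my
    · simpa [v] using mxy
    · simpa [v, ← pow_two] using myy
    · simpa [v, mul_comm] using myz
    · convert mxyz using 1; simp [v]; ring
    · convert myyz using 1; simp [v]; ring
    · convert myzz using 1; simp [v]; ring
    · convert myzzz using 1; simp [v]; ring
  have hz : ∀ u ∈ S, u * z ∈ S := by
    refine hmul z fun i => ?_
    fin_cases i
    · simpa [v] using mz
    · simpa [v] using mxz
    · simpa [v] using myz
    · simpa [v, ← pow_two] using mzz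
    · convert mxzz using 1; simp [v]; ring
    · convert myzz using 1; simp [v]; ring
    · convert mzzz using 1; simp [v]; ring
    · convert mzzzz using 1; simp [v]; ring
  have htop : S = ⊤ := by
    rw [eq_top_iff]
    rintro u -
    obtain ⟨p, rfl⟩ := hgen u
    induction p using MvPolynomial.induction_on with
    | C t =>
      rw [← algebraMap_eq, AlgHom.commutes, Algebra.algebraMap_eq_smul_one]
      exact S.smul_mem t m1
    | add p q hp hq => rw [map_add]; exact S.add_mem hp hq
    | mul_X p i hp =>
      rw [map_mul, aeval_X]
      fin_cases i
      · exact hx _ hp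
      · exact hy _ hp
      · exact hz _ hp
  rw [hSdef] at htop
  constructor
  · exact ⟨Submodule.fg_def.mpr ⟨_, Set.finite_range v, htop⟩⟩
  · have := finrank_range_le_card (R := ℂ) v
    rw [Set.finrank, htop, finrank_top] at this
    simpa using this

/-! ### The octic of slopes -/

section
variable {R : Type*} [CommRing R]

/-- On the line `y = r x` the relations force
`2 (c r² - b) r (1 - r) x = -B(r)`; this is the polynomial `B`. -/
noncomputable def slopeB (a b c : R) : Polynomial R :=
  Polynomial.C a * (Polynomial.C c * Polynomial.X - Polynomial.C b) * (1 + Polynomial.X ^ 2) * (1 - Polynomial.X)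
    + Polynomial.X * (Polynomial.C c * Polynomial.X - Polynomial.C b) ^ 2
    - Polynomial.C a * Polynomial.X * (1 - Polynomial.X) * (Polynomial.C c * Polynomial.X - Polynomial.C b)
    - Polynomial.C (a * (b + c)) * Polynomial.X * (1 - Polynomial.X) ^ 2

/-- The octic whose roots are the slopes `r = y / x` of the common zeros: eliminate `x` between
`2 (c r² - b) r (1 - r) x = -B(r)` and `r (1 - r) x² = a (c r - b)`. -/
noncomputable def slopePoly (a b c : R) : Polynomial R :=
  slopeB a b c ^ 2 - Polynomial.C (4 * a) * Polynomial.X * (1 - Polynomial.X)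
    * (Polynomial.C c * Polynomial.X - Polynomial.C b)
    * (Polynomial.C c * Polynomial.X ^ 2 - Polynomial.C b) ^ 2

lemma slopePoly_map {T : Type*} [CommRing T] (f : R →+* T) (a b c : R) :
    (slopePoly a b c).map f = slopePoly (f a) (f b) (f c) := by
  simp [slopePoly, slopeB, map_ofNat Polynomial.C 4]

lemma natDegree_slopePoly_le (a b c : R) : (slopePoly a b c).natDegree ≤ 8 := by
  unfold slopePoly slopeB
  compute_degree

lemma coeff_slopePoly (a b c : R) : (slopePoly a b c).coeff 8 = (a * c) ^ 2 := by
  unfold slopePoly slopeB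
  compute_degree!
end

lemma natDegree_slopePoly {a b c : ℂ} (ha : a ≠ 0) (hc : c ≠ 0) :
    (slopePoly a b c).natDegree = 8 :=
  Polynomial.natDegree_eq_of_le_of_coeff_ne_zero (natDegree_slopePoly_le a b c)
    (by rw [coeff_slopePoly]; exact pow_ne_zero _ (mul_ne_zero ha hc))

/-- At `(q0, q1, q2) = (-1, -1, 1)` the octic is `r⁸ - 4r⁷ + 4r⁶ + 2r⁴ + 12r³ + 1`. The witnesses
are the Bézout cofactors of it and its derivative, as given by the Euclidean algorithm over `ℚ`. -/
lemma slopePoly_special_separable : (slopePoly (-1) (-1) 1 : Polynomial ℂ).Separable := by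
  have h : (slopePoly (-1) (-1) 1 : Polynomial ℂ) = Polynomial.X ^ 8 - 4 * Polynomial.X ^ 7
      + 4 * Polynomial.X ^ 6 + 2 * Polynomial.X ^ 4 + 12 * Polynomial.X ^ 3 + 1 := by
    simp only [slopePoly, slopeB, map_neg, map_one, map_mul, map_add, map_ofNat]
    ring
  have hd : Polynomial.derivative (slopePoly (-1) (-1) 1 : Polynomial ℂ) =
      8 * Polynomial.X ^ 7 - 28 * Polynomial.X ^ 6 + 24 * Polynomial.X ^ 5
        + 8 * Polynomial.X ^ 3 + 36 * Polynomial.X ^ 2 := by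
    rw [h]
    simp [map_ofNat Polynomial.C]
    ring
  rw [Polynomial.Separable, hd, h]
  refine ⟨Polynomial.C (1 / 633344) * (633344 - 148644 * Polynomial.X ^ 2
    + 519292 * Polynomial.X ^ 3 - 762012 * Polynomial.X ^ 4 + 383492 * Polynomial.X ^ 5
    - 63432 * Polynomial.X ^ 6), Polynomial.C (1 / 633344) * (4129 - 226457 * Polynomial.X
    + 36305 * Polynomial.X ^ 2 + 28075 * Polynomial.X ^ 3 - 85505 * Polynomial.X ^ 4
    + 113273 * Polynomial.X ^ 5 - 51901 * Polynomial.X ^ 6 + 7929 * Polynomial.X ^ 7), ?_⟩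
  have hC : (Polynomial.C (1 / 633344 : ℂ)) * 633344 = 1 := by
    rw [← map_ofNat Polynomial.C, ← map_mul]; norm_num
  linear_combination hC

lemma slopePoly_separable {a b c : ℂ} (ha : a ≠ 0) (hc : c ≠ 0)
    (h : (slopePoly a b c).resultant (Polynomial.derivative (slopePoly a b c)) 8 7 ≠ 0) :
    (slopePoly a b c).Separable := by
  have hn := natDegree_slopePoly (b := b) ha hc
  have hn' : (Polynomial.derivative (slopePoly a b c)).natDegree = 7 := by
    rw [Polynomial.natDegree_derivative, hn]
  by_contra hs
  exact h (by
    have := Polynomial.resultant_eq_zero_iff.mpr ⟨Or.inl (by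
      intro h0; simp [h0] at hn), hs⟩
    rwa [hn, hn'] at this)

lemma resultant_special_ne_zero : (slopePoly (-1) (-1) 1 : Polynomial ℂ).resultant
    (Polynomial.derivative (slopePoly (-1) (-1) 1)) 8 7 ≠ 0 := by
  have hn : (slopePoly (-1) (-1) 1 : Polynomial ℂ).natDegree = 8 :=
    natDegree_slopePoly (by norm_num) (by norm_num)
  have hn' : (Polynomial.derivative (slopePoly (-1) (-1) 1 : Polynomial ℂ)).natDegree = 7 := by
    rw [Polynomial.natDegree_derivative, hn]
  have := Polynomial.resultant_ne_zero _ _ slopePoly_special_separable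
  rwa [hn, hn'] at this

/-- The resultant of the octic of slopes and its derivative, as a polynomial in the quantum
parameters. -/
noncomputable def slopeDisc : MvPolynomial (Fin 3) ℂ :=
  (slopePoly (X 0) (X 1) (X 2)).resultant
    (Polynomial.derivative (slopePoly (X 0) (X 1) (X 2))) 8 7

lemma eval_slopeDisc (a b c : ℂ) : eval ![a, b, c] slopeDisc =
    (slopePoly a b c).resultant (Polynomial.derivative (slopePoly a b c)) 8 7 := by
  have hmap : (slopePoly (X 0) (X 1) (X 2)).map (eval ![a, b, c]) = slopePoly a b c := by
    rw [slopePoly_map]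
    congr 1 <;> exact eval_X _
  rw [slopeDisc, ← Polynomial.resultant_map_map, ← Polynomial.derivative_map, hmap]

/-- The equation of the excluded locus. Besides the resultant it contains the degenerations
`q0 q1 q2 = 0`, `q1 = q2` (slope `1`) and `q1 = -q2` (a common zero at the origin, which has no
slope). -/
noncomputable def badLocus : MvPolynomial (Fin 3) ℂ :=
  slopeDisc * (X 0 * X 1 * X 2 * (X 1 - X 2) * (X 1 + X 2))

lemma badLocus_ne_zero : badLocus ≠ 0 := by
  refine mul_ne_zero ?_ ?_
  · intro h
    apply resultant_special_ne_zero
    rw [← eval_slopeDisc, h, map_zero]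
  · intro h
    have := congrArg (eval ![1, 1, 2]) h
    simp only [map_mul, map_sub, map_add, eval_X, map_zero] at this
    change (1 * 1 * 2 * (1 - 2) * (1 + 2) : ℂ) = 0 at this
    norm_num at this

/-- Away from `a b (b - c) (b + c) = 0`, a simple root of the octic of slopes is the slope of a
common zero of the three relations. -/
lemma exists_point {a b c r : ℂ} (ha : a ≠ 0) (hb : b ≠ 0) (hbc : b - c ≠ 0) (hbc' : b + c ≠ 0)
    (hr : (slopePoly a b c).eval r = 0)
    (hr' : (Polynomial.derivative (slopePoly a b c)).eval r ≠ 0) :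
    ∃ x y z : ℂ, x ≠ 0 ∧ y = r * x ∧ x * y + a * x + a * y - a * z = 0 ∧
      x ^ 2 - x * z + 1 / 2 * z ^ 2 + 1 / 2 * a * x + 1 / 2 * a * y - 1 / 2 * a * z - b * x
        - 1 / 2 * a * b - 1 / 2 * a * c = 0 ∧
      y ^ 2 - y * z + 1 / 2 * z ^ 2 + 1 / 2 * a * x + 1 / 2 * a * y - 1 / 2 * a * z
        - 1 / 2 * a * b - c * y - 1 / 2 * a * c = 0 := by
  obtain ⟨B, hB⟩ : ∃ B, B = (slopeB a b c).eval r := ⟨_, rfl⟩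
  have hP : B ^ 2 = 4 * a * r * (1 - r) * (c * r - b) * (c * r ^ 2 - b) ^ 2 := by
    rw [slopePoly] at hr
    simp [← hB] at hr
    linear_combination hr
  -- if `c r² = b` then `B(r) = 0` too, and the octic `B² - (…)(c r² - b)²` has a double root
  have hd : c * r ^ 2 - b ≠ 0 := by
    intro h0
    have hB0 : B = 0 := by
      rw [h0] at hP; simpa using hP
    apply hr'
    rw [slopePoly]
    simp [← hB, hB0, h0, Polynomial.derivative_pow]
  have hB' : B = a * (c * r - b) * (1 + r ^ 2) * (1 - r) + r * (c * r - b) ^ 2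
      - a * r * (1 - r) * (c * r - b) - a * (b + c) * r * (1 - r) ^ 2 := by
    rw [hB, slopeB]; simp
  have hr0 : r ≠ 0 := by
    rintro rfl
    have : (a * b) ^ 2 = 0 := by
      rw [hB'] at hP; linear_combination hP
    simp [ha, hb] at this
  have hr1 : 1 - r ≠ 0 := by
    intro h1
    obtain rfl : r = 1 := by linear_combination -h1
    have : (b - c) ^ 4 = 0 := by
      rw [hB'] at hP; linear_combination hP
    exact hbc (by simpa using this)
  have hB0 : B ≠ 0 := by
    intro h0
    have hl : c * r - b = 0 := by
      rw [h0] at hP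
      simpa [ha, hr0, hr1, hd] using hP
    rw [h0, hl] at hB'
    simp [ha, hr0, hr1, hbc'] at hB'
  obtain ⟨x, hx⟩ : ∃ x, x * (2 * (c * r ^ 2 - b) * r * (1 - r)) = -B :=
    ⟨-B / (2 * (c * r ^ 2 - b) * r * (1 - r)), by field_simp⟩
  -- `w = z - x - y`, in terms of which the first relation reads `x y = a w`
  obtain ⟨w, hw⟩ : ∃ w, w * (1 - r) = c * r - b := ⟨(c * r - b) / (1 - r), by field_simp⟩
  have hx2 : r * x ^ 2 = a * w := by
    have : (4 * (c * r ^ 2 - b) ^ 2 * r * (1 - r) ^ 2) ≠ 0 := by simp [hr0, hr1, hd]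
    apply mul_left_cancel₀ this
    linear_combination (x * (2 * (c * r ^ 2 - b) * r * (1 - r)) - B) * hx + hP
      - 4 * a * r * (1 - r) * (c * r ^ 2 - b) ^ 2 * hw
  have e2 : x ^ 2 * (1 + r ^ 2) + w ^ 2 + 2 * r * x * w - a * w - 2 * b * x - a * (b + c) = 0 := by
    have : r * (1 - r) ^ 2 ≠ 0 := by simp [hr0, hr1]
    apply mul_left_cancel₀ this
    linear_combination (1 - r) ^ 2 * (1 + r ^ 2) * hx2 + hx - hB' + (a * (1 + r ^ 2) * (1 - r) + r * (w * (1 - r) + (c * r - b)) + 2 * r ^ 2 * x * (1 - r) - a * r * (1 - r)) * hw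
  refine ⟨x, r * x, w + x + r * x, ?_, rfl, ?_, ?_, ?_⟩
  · rintro rfl
    exact hB0 (by simpa using hx)
  · linear_combination hx2
  · linear_combination (1 / 2) * e2
  · linear_combination (1 / 2) * e2 + x * hw

/-! ### The isomorphism -/

/-- A finite-dimensional algebra `A` of dimension at most `n` with `n` complex points `φ i`
separated by `x`-`y`-slope is a product of copies of `ℂ`: the product of the `y - r j * x` over
`j ≠ i` vanishes at all points but the `i`-th. -/
lemma nonempty_algEquiv_of_points {A : Type*} [CommRing A] [Algebra ℂ A] [Module.Finite ℂ A]
    {n : ℕ} (hn : Module.finrank ℂ A ≤ n) (φ : Fin n → A →ₐ[ℂ] ℂ) (x y : A) (r : Fin n → ℂ)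
    (hr : Function.Injective r) (hx : ∀ i, φ i x ≠ 0) (hy : ∀ i, φ i y = r i * φ i x) :
    Nonempty (A ≃ₐ[ℂ] (Fin n → ℂ)) := by
  let Φ : A →ₐ[ℂ] (Fin n → ℂ) := AlgHom.pi φ
  have hsurj : Function.Surjective Φ := by
    let e : Fin n → A := fun i => ∏ j ∈ Finset.univ.erase i, (y - algebraMap ℂ A (r j) * x)
    have he : ∀ i k, φ k (e i) = ∏ j ∈ Finset.univ.erase i, ((r k - r j) * φ k x) := by
      intro i k
      simp only [e, map_prod, map_sub, map_mul, hy, AlgHom.commutes, Algebra.algebraMap_self,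
        RingHom.id_apply, sub_mul]
    have he0 : ∀ i, φ i (e i) ≠ 0 := by
      intro i
      rw [he, Finset.prod_ne_zero_iff]
      intro j hj
      exact mul_ne_zero (sub_ne_zero.mpr (hr.ne (Finset.ne_of_mem_erase hj).symm)) (hx i)
    have he1 : ∀ i k, k ≠ i → φ k (e i) = 0 := by
      intro i k hk
      rw [he]
      exact Finset.prod_eq_zero (Finset.mem_erase.mpr ⟨hk, Finset.mem_univ k⟩) (by simp)
    intro f
    refine ⟨∑ i, (f i / φ i (e i)) • e i, ?_⟩
    ext k
    change φ k _ = _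
    rw [map_sum, Finset.sum_eq_single k]
    · rw [map_smul, smul_eq_mul, div_mul_cancel₀ _ (he0 k)]
    · intro i _ hi
      rw [map_smul, he1 i k hi.symm, smul_zero]
    · simp
  have hdim : Module.finrank ℂ A = Module.finrank ℂ (Fin n → ℂ) := by
    refine le_antisymm (by simpa using hn) ?_
    exact LinearMap.finrank_le_finrank_of_surjective (f := Φ.toLinearMap) hsurj
  have hinj : Function.Injective Φ :=
    (LinearMap.injective_iff_surjective_of_finrank_eq_finrank (f := Φ.toLinearMap) hdim).mpr hsurj
  exact ⟨AlgEquiv.ofBijective Φ ⟨hinj, hsurj⟩⟩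

/-- Small quantum cohomology of the Fano threefold `M320` (the blow-up of the quadric `Q³` along two disjoint lines),
specialized at `(q0, q1, q2)`: for generic `(q0, q1, q2) ∈ ℂ³` (i.e. on the nonempty
Zariski-open set where a nonzero polynomial `g` does not vanish) the quotient ring is
isomorphic as a `ℂ`-algebra to `ℂ⁸`, hence a semisimple commutative `ℂ`-algebra of
`ℂ`-dimension 8.  Here `E1 = X 0`, `E2 = X 1` and `H = X 2`. -/
theorem qh_M3_20_generically_semisimple :
    ∃ g : MvPolynomial (Fin 3) ℂ, g ≠ 0 ∧
      ∀ q0 q1 q2 : ℂ, eval ![q0, q1, q2] g ≠ 0 →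
        Nonempty
          ((MvPolynomial (Fin 3) ℂ ⧸ Ideal.span
            { X 0 * X 1 + C q0 * X 0 + C q0 * X 1 - C q0 * X 2,
              X 0 ^ 2 - X 0 * X 2 + C (1 / 2) * X 2 ^ 2 + C (1 / 2 * q0) * X 0 + C (1 / 2 * q0) * X 1 - C (1 / 2 * q0) * X 2 - C q1 * X 0 - C (1 / 2 * q0 * q1) - C (1 / 2 * q0 * q2),
              X 1 ^ 2 - X 1 * X 2 + C (1 / 2) * X 2 ^ 2 + C (1 / 2 * q0) * X 0 + C (1 / 2 * q0) * X 1 - C (1 / 2 * q0) * X 2 - C (1 / 2 * q0 * q1) - C q2 * X 1 - C (1 / 2 * q0 * q2) })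
          ≃ₐ[ℂ] (Fin 8 → ℂ)) := by
  refine ⟨badLocus, badLocus_ne_zero, fun q0 q1 q2 hq => ?_⟩
  rw [badLocus, map_mul, eval_slopeDisc] at hq
  obtain ⟨hres, hq⟩ := mul_ne_zero_iff.mp hq
  simp only [map_mul, map_sub, map_add, eval_X, mul_ne_zero_iff] at hq
  obtain ⟨⟨⟨⟨h0, h1⟩, h2⟩, h12⟩, h12'⟩ := hq
  change q0 ≠ 0 at h0
  change q1 ≠ 0 at h1
  change q2 ≠ 0 at h2
  change q1 - q2 ≠ 0 at h12
  change q1 + q2 ≠ 0 at h12'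
  have hsep : (slopePoly q0 q1 q2).Separable := slopePoly_separable h0 h2 hres
  have hcard : Fintype.card ((slopePoly q0 q1 q2).rootSet ℂ) = 8 := by
    rw [Polynomial.card_rootSet_eq_natDegree hsep (IsAlgClosed.splits _),
      natDegree_slopePoly h0 h2]
  let ρ := (Fintype.equivFinOfCardEq hcard).symm
  have hroot : ∀ i, (slopePoly q0 q1 q2).eval (ρ i : ℂ) = 0 := fun i => by
    have := (Polynomial.mem_rootSet.mp (ρ i).2).2
    rwa [Polynomial.coe_aeval_eq_eval] at this
  have hsimple : ∀ i, (Polynomial.derivative (slopePoly q0 q1 q2)).eval (ρ i : ℂ) ≠ 0 := fun i =>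
    hsep.eval₂_derivative_ne_zero (RingHom.id ℂ) (hroot i)
  choose x y z hx hy e1 e2 e3 using fun i => exists_point h0 h1 h12 h12' (hroot i) (hsimple i)
  generalize hI : Ideal.span (_ : Set (MvPolynomial (Fin 3) ℂ)) = I
  have hker : ∀ i, ∀ p ∈ I, aeval ![x i, y i, z i] p = 0 := by
    intro i p hp
    have hle : I ≤ RingHom.ker (aeval ![x i, y i, z i] : MvPolynomial (Fin 3) ℂ →ₐ[ℂ] ℂ) := by
      rw [← hI, Ideal.span_le, Set.insert_subset_iff, Set.insert_subset_iff,
        Set.singleton_subset_iff]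
      simp only [SetLike.mem_coe, RingHom.mem_ker, map_add, map_sub, map_mul, map_pow, aeval_X,
        aeval_C, Algebra.algebraMap_self, RingHom.id_apply]
      exact ⟨e1 i, e2 i, e3 i⟩
    exact hle hp
  let π := Ideal.Quotient.mkₐ ℂ I
  have hC : ∀ t : ℂ, π (C t) = algebraMap ℂ _ t := fun t => π.commutes t
  have hπ : ∀ p ∈ I, π p = 0 := fun p hp => Ideal.Quotient.eq_zero_iff_mem.mpr hp
  have hmem := hI.le
  rw [Ideal.span_le, Set.insert_subset_iff, Set.insert_subset_iff, Set.singleton_subset_iff]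
    at hmem
  have r1 := hπ _ hmem.1
  have r2 := hπ _ hmem.2.1
  have r3 := hπ _ hmem.2.2
  simp only [map_add, map_sub, map_mul, map_pow, hC] at r1 r2 r3
  obtain ⟨hfin, hrank⟩ := finite_and_finrank_le (algebraMap ℂ _ q0) (algebraMap ℂ _ q1)
    (algebraMap ℂ _ q2) (algebraMap ℂ _ (1 / 2)) (π (X 0)) (π (X 1)) (π (X 2))
    (by rw [← map_ofNat (algebraMap ℂ (MvPolynomial (Fin 3) ℂ ⧸ I)) 2, ← map_mul]; norm_num)
    ⟨q0, rfl⟩ ⟨q1, rfl⟩ ⟨q2, rfl⟩ ⟨_, rfl⟩ r1 r2 r3 (by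
      intro u
      obtain ⟨p, rfl⟩ := Ideal.Quotient.mkₐ_surjective ℂ I u
      refine ⟨p, ?_⟩
      have : aeval ![π (X 0), π (X 1), π (X 2)] = π := by
        ext i
        fin_cases i <;> simp
      rw [this])
  refine nonempty_algEquiv_of_points hrank
    (fun i => Ideal.Quotient.liftₐ I (aeval ![x i, y i, z i]) (hker i))
    (π (X 0)) (π (X 1)) (fun i => (ρ i : ℂ)) (Subtype.val_injective.comp ρ.injective) ?_ ?_
  · intro i
    change aeval ![x i, y i, z i] (X 0) ≠ 0
    rw [aeval_X]
    exact hx i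
  · intro i
    change aeval ![x i, y i, z i] (X 1) = _ * aeval ![x i, y i, z i] (X 0)
    rw [aeval_X, aeval_X]
    exact hy i
end

section
/- For generic (q0, q1, q2) ∈ ℂ³ — i.e., for all (q0, q1, q2) in some nonempty Zariski-open subset of ℂ³ — the quotient ring ℂ[E1,E2,H] / (E1·E2 − q0, E1² − 2·E1·H + H² − E1·q1, E2² − 2·E2·H + H² − E2·q2) is a semisimple commutative ℂ-algebra of ℂ-dimension 8, i.e., it is isomorphic as a ℂ-algebra to ℂ⁸. (This ring is the specialization at (q0,q1,q2) of the small quantum cohomology ring of the Fano threefold M³₂₅, the blow-up of ℙ³ along two disjoint lines.) -/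
/-!
Put `u = E1 - H`.  For `q0, q1 ≠ 0` the relations give `q1 * E1 = u ^ 2`, and since `E1 * E2 = q0`
also `u ^ 2 * E2 = q0 * q1`; substituting in the third relation shows that `u` is a root of the
octic `octic q0 q1 q2 = (u ^ 4 - q1 * u ^ 3 - q0 * q1 ^ 2) ^ 2 - q0 * q1 ^ 3 * q2 * u ^ 2`
(`aeval_octic`).  The octic has no linear term and a nonzero constant term, so `u ^ 2` is inverted
by a polynomial in `u`, and `u` generates the whole quotient ring (`mem_range_aeval`).
Conversely each root of the octic gives a point of the scheme.

The octic has eight distinct roots away from the vanishing locus of an explicit polynomial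
(`no_double_root`).  Evaluation at the corresponding eight points is then the required isomorphism:
it is surjective by Lagrange interpolation in `u`, and injective because a polynomial in `u`
that vanishes at all eight roots is a multiple of the octic, hence zero in the quotient.
-/

open MvPolynomial

set_option maxHeartbeats 1000000

/-- The octic satisfied by `u = E1 - H` in the quotient ring. -/
noncomputable def octic (q0 q1 q2 : ℂ) : Polynomial ℂ :=
  (Polynomial.X ^ 4 - Polynomial.C q1 * Polynomial.X ^ 3 - Polynomial.C (q0 * q1 ^ 2)) ^ 2
    - Polynomial.C (q0 * q1 ^ 3 * q2) * Polynomial.X ^ 2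

lemma eval_octic (q0 q1 q2 u : ℂ) : (octic q0 q1 q2).eval u =
    (u ^ 4 - q1 * u ^ 3 - q0 * q1 ^ 2) ^ 2 - q0 * q1 ^ 3 * q2 * u ^ 2 := by
  simp [octic]

lemma eval_derivative_octic (q0 q1 q2 u : ℂ) : (octic q0 q1 q2).derivative.eval u =
    2 * (u ^ 4 - q1 * u ^ 3 - q0 * q1 ^ 2) * (4 * u ^ 3 - 3 * q1 * u ^ 2)
      - 2 * (q0 * q1 ^ 3 * q2) * u := by
  simp [octic, Polynomial.derivative_pow]
  ring

lemma natDegree_octic (q0 q1 q2 : ℂ) : (octic q0 q1 q2).natDegree = 8 := by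
  unfold octic
  compute_degree!

/-- Up to a constant and powers of the `qi`, `hg` involves the discriminant of the octic; the proof
solves for `q0` and `q2` in terms of `q1` and a double root `u`, and substitutes. -/
lemma no_double_root {q0 q1 q2 u : ℂ} (h0 : q0 ≠ 0) (h1 : q1 ≠ 0) (h2 : q2 ≠ 0)
    (hg : q0 * (256 * q0 + 27 * q1 ^ 2 + 27 * q2 ^ 2 - 6 * q1 * q2) ^ 2
      - 16 * q1 * q2 * (48 * q0 + q1 * q2) ^ 2 ≠ 0)
    (hF : (octic q0 q1 q2).eval u = 0) (hF' : (octic q0 q1 q2).derivative.eval u = 0) : False := by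
  rw [eval_octic] at hF
  rw [eval_derivative_octic] at hF'
  have hu : u ≠ 0 := by
    rintro rfl
    have : (q0 * q1 ^ 2) ^ 2 = 0 := by linear_combination hF
    simp [h0, h1] at this
  -- Writing the octic as `P ^ 2 - K * u ^ 2`, a double root satisfies `P * (u * P' - P) = 0`.
  have hprod : (u ^ 4 - q1 * u ^ 3 - q0 * q1 ^ 2) *
      (3 * u ^ 4 - 2 * q1 * u ^ 3 + q0 * q1 ^ 2) = 0 := by
    linear_combination u / 2 * hF' - hF
  rcases mul_eq_zero.mp hprod with hP | hR
  · have : q0 * q1 ^ 3 * q2 * u ^ 2 = 0 := by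
      linear_combination (u ^ 4 - q1 * u ^ 3 - q0 * q1 ^ 2) * hP - hF
    simp [h0, h1, h2, hu] at this
  · obtain ⟨d, hdef⟩ : ∃ d, d = 2 * q1 - 3 * u := ⟨_, rfl⟩
    have hd : d ≠ 0 := by
      rintro rfl
      have : q0 * q1 ^ 2 = 0 := by linear_combination hR - u ^ 3 * hdef
      simp [h0, h1] at this
    have e0 : q0 = u ^ 3 * d / q1 ^ 2 := by
      field_simp
      linear_combination hR - u ^ 3 * hdef
    have e2 : q2 = u * (4 * u - 3 * q1) ^ 2 / (q1 * d) := by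
      have hq : u ^ 5 * (q2 * (q1 * d) - u * (4 * u - 3 * q1) ^ 2) = 0 := by
        rw [e0] at hF
        field_simp at hF
        rw [hdef] at hF ⊢
        linear_combination -hF
      have := (mul_eq_zero.mp hq).resolve_left (pow_ne_zero _ hu)
      field_simp
      linear_combination this
    apply hg
    rw [e2, e0]
    field_simp
    rw [hdef]
    ring

/-- For generic parameters the octic has exactly eight distinct roots, indexed by `z`; the last
clause says that the octic generates the ideal of polynomials vanishing at all of them. -/
lemma exists_roots {q0 q1 q2 : ℂ} (h0 : q0 ≠ 0) (h1 : q1 ≠ 0) (h2 : q2 ≠ 0)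
    (hg : q0 * (256 * q0 + 27 * q1 ^ 2 + 27 * q2 ^ 2 - 6 * q1 * q2) ^ 2
      - 16 * q1 * q2 * (48 * q0 + q1 * q2) ^ 2 ≠ 0) :
    ∃ z : Fin 8 → ℂ, Function.Injective z ∧ (∀ i, (octic q0 q1 q2).eval (z i) = 0) ∧
      ∀ f : Polynomial ℂ, (∀ i, f.eval (z i) = 0) → octic q0 q1 q2 ∣ f := by
  classical
  have hne : octic q0 q1 q2 ≠ 0 := Polynomial.ne_zero_of_natDegree_gt
    (n := 0) (by rw [natDegree_octic]; norm_num)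
  have hnd : (octic q0 q1 q2).roots.Nodup := by
    rw [Multiset.nodup_iff_count_le_one]
    intro u
    by_contra! h
    rw [Polynomial.count_roots, Polynomial.one_lt_rootMultiplicity_iff_isRoot hne] at h
    exact no_double_root h0 h1 h2 hg h.1 h.2
  have hcard : (octic q0 q1 q2).roots.toFinset.card = 8 := by
    rw [Multiset.toFinset_card_of_nodup hnd, IsAlgClosed.card_roots_eq_natDegree, natDegree_octic]
  let e := (octic q0 q1 q2).roots.toFinset.equivFinOfCardEq hcard
  refine ⟨fun i => (e.symm i : ℂ), fun i j hij => e.symm.injective (Subtype.ext hij),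
    fun i => ?_, fun f hf => ?_⟩
  · have := (e.symm i).2
    rw [Multiset.mem_toFinset, Polynomial.mem_roots hne] at this
    exact this
  · rcases eq_or_ne f 0 with rfl | hf0
    · exact dvd_zero _
    rw [IsAlgClosed.dvd_iff_roots_le_roots hne hf0, Multiset.le_iff_subset hnd]
    intro u hu
    rw [Polynomial.mem_roots hf0]
    have := hf (e ⟨u, Multiset.mem_toFinset.mpr hu⟩)
    simpa using this

section Generator

variable {A : Type*} [CommRing A] [Algebra ℂ A] {q0 q1 q2 : ℂ} {x0 x1 x2 : A}

lemma aeval_octic (r0 : x0 * x1 = algebraMap ℂ A q0)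
    (r1 : (x0 - x2) ^ 2 = algebraMap ℂ A q1 * x0)
    (r2 : (x1 - x2) ^ 2 = algebraMap ℂ A q2 * x1) :
    Polynomial.aeval (x0 - x2) (octic q0 q1 q2) = 0 := by
  simp only [octic, map_sub, map_mul, map_pow, Polynomial.aeval_X, Polynomial.aeval_C]
  rw [← r0]
  generalize algebraMap ℂ A q1 = a at *
  generalize algebraMap ℂ A q2 = b at *
  -- With `u = x0 - x2` and `v = x1 - x2`, the quartic in `octic` equals `-(q1 * u ^ 2 * v)`.
  have hP : (x0 - x2) ^ 4 - a * (x0 - x2) ^ 3 - x0 * x1 * a ^ 2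
      = -(a * (x0 - x2) ^ 2 * (x1 - x2)) := by
    linear_combination ((x0 - x2) ^ 2 + a * x1) * r1
  rw [hP]
  linear_combination a ^ 2 * (x0 - x2) ^ 4 * r2 + a ^ 2 * (x0 - x2) ^ 2 * b * x1 * r1

/-- The subalgebra generated by `u = x0 - x2` contains `x0`, `x1` and `x2`: for `x1` the octic,
which has no linear term, is solved for its constant term after multiplication by `x1`. -/
lemma mem_range_aeval (h0 : q0 ≠ 0) (h1 : q1 ≠ 0) (r0 : x0 * x1 = algebraMap ℂ A q0)
    (r1 : (x0 - x2) ^ 2 = algebraMap ℂ A q1 * x0)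
    (r2 : (x1 - x2) ^ 2 = algebraMap ℂ A q2 * x1) (i : Fin 3) :
    ![x0, x1, x2] i ∈ (Polynomial.aeval (R := ℂ) (x0 - x2)).range := by
  have m0 : x0 ∈ (Polynomial.aeval (R := ℂ) (x0 - x2)).range := by
    refine (AlgHom.mem_range _).2 ⟨Polynomial.C q1⁻¹ * Polynomial.X ^ 2, ?_⟩
    have hinv : algebraMap ℂ A q1⁻¹ * algebraMap ℂ A q1 = 1 := by
      rw [← map_mul, inv_mul_cancel₀ h1, map_one]
    simp only [map_mul, map_pow, Polynomial.aeval_X, Polynomial.aeval_C]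
    linear_combination algebraMap ℂ A q1⁻¹ * r1 + x0 * hinv
  have mu : x0 - x2 ∈ (Polynomial.aeval (R := ℂ) (x0 - x2)).range :=
    ⟨Polynomial.X, Polynomial.aeval_X _⟩
  have m1 : x1 ∈ (Polynomial.aeval (R := ℂ) (x0 - x2)).range := by
    refine (AlgHom.mem_range _).2 ⟨Polynomial.C (-(q0 * q1 ^ 3)⁻¹) * ((Polynomial.X ^ 3 - Polynomial.C q1 * Polynomial.X ^ 2)
      ^ 2 - 2 * Polynomial.C (q0 * q1 ^ 2) * (Polynomial.X ^ 2 - Polynomial.C q1 * Polynomial.X)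
      - Polynomial.C (q0 * q1 ^ 3 * q2)), ?_⟩
    have hF := aeval_octic r0 r1 r2
    have hinv : algebraMap ℂ A (q0 ^ 2 * q1 ^ 4)⁻¹ * (algebraMap ℂ A q0 ^ 2 * algebraMap ℂ A q1 ^ 4)
        = 1 := by
      rw [← map_pow, ← map_pow, ← map_mul, ← map_mul, inv_mul_cancel₀ (by positivity), map_one]
    have hinv' : algebraMap ℂ A (-(q0 * q1 ^ 3)⁻¹)
        = -(algebraMap ℂ A (q0 ^ 2 * q1 ^ 4)⁻¹ * (algebraMap ℂ A q0 * algebraMap ℂ A q1)) := by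
      rw [← map_mul, ← map_mul, ← map_neg]
      congr 1
      field_simp
    have hx : (x0 - x2) ^ 2 * x1 = algebraMap ℂ A q0 * algebraMap ℂ A q1 := by
      linear_combination x1 * r1 + algebraMap ℂ A q1 * r0
    simp only [octic, map_sub, map_mul, map_pow, Polynomial.aeval_X,
      Polynomial.aeval_C, map_ofNat, hinv'] at hF ⊢
    generalize algebraMap ℂ A q0 = a0 at *
    generalize algebraMap ℂ A q1 = a1 at *
    generalize algebraMap ℂ A q2 = a2 at *
    generalize algebraMap ℂ A (q0 ^ 2 * q1 ^ 4)⁻¹ = c at *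
    generalize x0 - x2 = u at *
    linear_combination c * ((u ^ 3 - a1 * u ^ 2) ^ 2 - 2 * (a0 * a1 ^ 2) * (u ^ 2 - a1 * u)
      - a0 * a1 ^ 3 * a2) * hx - c * x1 * hF + x1 * hinv
  fin_cases i
  · exact m0
  · exact m1
  · have := sub_mem m0 mu
    rwa [sub_sub_cancel] at this

end Generator

/-- The point of the scheme with `E1 - H = u`, in the coordinates `E1, E2, H`. -/
noncomputable def point (q0 q1 u : ℂ) : Fin 3 → ℂ :=
  ![u ^ 2 / q1, q0 * q1 / u ^ 2, u ^ 2 / q1 - u]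

/-- Small quantum cohomology of the Fano threefold `M325` (the blow-up of `ℙ³` along two disjoint lines),
specialized at `(q0, q1, q2)`: for generic `(q0, q1, q2) ∈ ℂ³` (i.e. on the nonempty
Zariski-open set where a nonzero polynomial `g` does not vanish) the quotient ring is
isomorphic as a `ℂ`-algebra to `ℂ⁸`, hence a semisimple commutative `ℂ`-algebra of
`ℂ`-dimension 8.  Here `E1 = X 0`, `E2 = X 1` and `H = X 2`. -/
theorem qh_M3_25_generically_semisimple :
    ∃ g : MvPolynomial (Fin 3) ℂ, g ≠ 0 ∧
      ∀ q0 q1 q2 : ℂ, eval ![q0, q1, q2] g ≠ 0 →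
        Nonempty
          ((MvPolynomial (Fin 3) ℂ ⧸ Ideal.span
            { X 0 * X 1 - C q0,
              X 0 ^ 2 - C 2 * (X 0 * X 2) + X 2 ^ 2 - C q1 * X 0,
              X 1 ^ 2 - C 2 * (X 1 * X 2) + X 2 ^ 2 - C q2 * X 1 })
          ≃ₐ[ℂ] (Fin 8 → ℂ)) := by
  classical
  refine ⟨X 0 * X 1 * X 2 * (X 0 * (C 256 * X 0 + C 27 * X 1 ^ 2 + C 27 * X 2 ^ 2
    - C 6 * X 1 * X 2) ^ 2 - C 16 * X 1 * X 2 * (C 48 * X 0 + X 1 * X 2) ^ 2), ?_, ?_⟩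
  · intro h
    -- The point `(1, 1, -1)` is chosen so that both terms of the discriminant are positive.
    have := congrArg (eval ![1, 1, -1]) h
    simp at this
    norm_num at this
  intro q0 q1 q2 hq
  simp only [map_mul, map_sub, map_add, map_pow, eval_X, eval_C, Matrix.cons_val_zero,
    Matrix.cons_val_one, Matrix.cons_val, mul_ne_zero_iff] at hq
  obtain ⟨⟨⟨h0, h1⟩, h2⟩, hg⟩ := hq
  obtain ⟨z, hz, hroot, hdvd⟩ := exists_roots h0 h1 h2 hg
  set I : Ideal (MvPolynomial (Fin 3) ℂ) := Ideal.span
    { X 0 * X 1 - C q0,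
      X 0 ^ 2 - C 2 * (X 0 * X 2) + X 2 ^ 2 - C q1 * X 0,
      X 1 ^ 2 - C 2 * (X 1 * X 2) + X 2 ^ 2 - C q2 * X 1 } with hI
  have hz0 : ∀ i, z i ≠ 0 := by
    intro i hi
    have := hroot i
    rw [eval_octic, hi] at this
    have h : (q0 * q1 ^ 2) ^ 2 = 0 := by linear_combination this
    simp [h0, h1] at h
  -- Simultaneous evaluation at the eight points.
  let ev : MvPolynomial (Fin 3) ℂ →ₐ[ℂ] (Fin 8 → ℂ) :=
    AlgHom.pi fun i => aeval (point q0 q1 (z i))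
  have hev : ∀ a ∈ I, ev a = 0 := by
    intro a ha
    have hle : I ≤ RingHom.ker ev := by
      rw [hI, Ideal.span_le]
      rintro p (rfl | rfl | rfl)
      all_goals
        rw [SetLike.mem_coe, RingHom.mem_ker]
        funext i
        have hi := hz0 i
        have hr := hroot i
        rw [eval_octic] at hr
        simp only [ev, point, AlgHom.pi_apply, Pi.zero_apply, map_sub, map_add, map_mul, map_pow,
          aeval_X, algHom_C, Algebra.algebraMap_self_apply, Matrix.cons_val_zero,
          Matrix.cons_val_one, Matrix.cons_val]
        field_simp
      · ring
      · ring
      · linear_combination hr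
    exact hle ha
  let Φ := Ideal.Quotient.liftₐ I ev hev
  have hΦ : ∀ p, Φ (Ideal.Quotient.mk I p) = ev p := fun p => Ideal.Quotient.lift_mk I _ _
  let x : Fin 3 → MvPolynomial (Fin 3) ℂ ⧸ I := fun j => Ideal.Quotient.mk I (X j)
  have hC : ∀ c : ℂ, algebraMap ℂ (MvPolynomial (Fin 3) ℂ ⧸ I) c = Ideal.Quotient.mk I (C c) :=
    fun c => rfl
  have r0 : x 0 * x 1 = algebraMap ℂ _ q0 := by
    rw [hC, ← map_mul, Ideal.Quotient.eq]
    exact Ideal.subset_span (by simp)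
  have r1 : (x 0 - x 2) ^ 2 = algebraMap ℂ _ q1 * x 0 := by
    rw [hC, ← map_sub, ← map_pow, ← map_mul, Ideal.Quotient.eq]
    refine Ideal.subset_span (Or.inr (Or.inl ?_))
    rw [map_ofNat]
    ring
  have r2 : (x 1 - x 2) ^ 2 = algebraMap ℂ _ q2 * x 1 := by
    rw [hC, ← map_sub, ← map_pow, ← map_mul, Ideal.Quotient.eq]
    refine Ideal.subset_span (Or.inr (Or.inr ?_))
    rw [Set.mem_singleton_iff, map_ofNat]
    ring
  -- The quotient is generated by `u = E1 - H`.
  have hgen : ∀ a, ∃ f : Polynomial ℂ, Polynomial.aeval (x 0 - x 2) f = a := by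
    intro a
    obtain ⟨p, rfl⟩ := Ideal.Quotient.mk_surjective a
    change Ideal.Quotient.mk I p ∈ (Polynomial.aeval (R := ℂ) (x 0 - x 2)).range
    induction p using MvPolynomial.induction_on with
    | C c => exact Subalgebra.algebraMap_mem _ c
    | add p q hp hq => rw [map_add]; exact add_mem hp hq
    | mul_X p j hp =>
      rw [map_mul]
      refine mul_mem hp ?_
      have := mem_range_aeval h0 h1 r0 r1 r2 j
      fin_cases j <;> exact this
  have hΦf : ∀ (f : Polynomial ℂ) (i : Fin 8),
      Φ (Polynomial.aeval (x 0 - x 2) f) i = f.eval (z i) := by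
    intro f i
    have hu : Φ (x 0 - x 2) = z := by
      rw [map_sub, hΦ, hΦ]
      funext i
      simp [ev, point]
    rw [← Polynomial.aeval_algHom_apply, hu, Polynomial.aeval_fn_apply, Polynomial.coe_aeval_eq_eval]
  refine ⟨AlgEquiv.ofBijective Φ ⟨?_, ?_⟩⟩
  · rw [injective_iff_map_eq_zero]
    intro a ha
    obtain ⟨f, rfl⟩ := hgen a
    obtain ⟨k, rfl⟩ := hdvd f fun i => by rw [← hΦf, ha, Pi.zero_apply]
    rw [map_mul, aeval_octic r0 r1 r2, zero_mul]
  · intro w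
    refine ⟨Polynomial.aeval (x 0 - x 2) (Lagrange.interpolate Finset.univ z w), ?_⟩
    funext i
    rw [hΦf, Lagrange.eval_interpolate_at_node w hz.injOn (Finset.mem_univ i)]
end

section
/- Let c, p ≥ 1 be integers, assign positive integer weights to variables x₁,…,x_c and q₁,…,q_p, and let f₁,…,f_c ∈ ℂ[x₁,…,x_c,q₁,…,q_p] be weighted-homogeneous polynomials with respect to these weights. Assume that the ℂ-algebra ℂ[x₁,…,x_c]/(f₁(x,0),…,f_c(x,0)) obtained by setting all q-variables to 0 is finite-dimensional over ℂ. If there exists a single point q* ∈ ℂ^p such that the specialized algebra ℂ[x₁,…,x_c]/(f₁(x,q*),…,f_c(x,q*)) is reduced, then the set of all q ∈ ℂ^p for which ℂ[x₁,…,x_c]/(f₁(x,q),…,f_c(x,q)) is reduced contains a nonempty Zariski-open subset of ℂ^p. In other words, semisimplicity of the specialized algebra at one parameter value implies semisimplicity at all generic parameter values. -/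
/-!
Write `A = ℂ[q]` and `B = ℂ[x,q]/(f)`; the specialized algebra at `q` is the fibre `ℂ ⊗[A] B`
along evaluation at `q`. The proof shows that the locus of reduced fibres is Zariski-open because
it is the complement of the support of a finite `A`-module; no flatness of `B` over `A` is needed.

* `B` is a finite `A`-module (`finite_of_finite_special_fiber`). This is a graded Nakayama argument,
  and the only place where the grading and the hypothesis at `q = 0` enter: an `x`-monomial of large
  weight is congruent modulo `(f)` to a polynomial of the same weight all of whose terms involve some
  `q`-variable, hence to an `A`-combination of `x`-monomials of smaller weight.
* Therefore `Ω[B⁄A]` is a finite `A`-module, and it commutes with base change. A finite algebra over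
  the perfect field `ℂ` is reduced iff it is unramified, i.e. iff its differentials vanish. Hence if
  the fibre at `q*` is reduced, then `ℂ ⊗[A] Ω[B⁄A] = 0` there, and Nakayama gives `g ∈ A` with
  `g(q*) ≠ 0` that kills `Ω[B⁄A]` (`exists_annihilator_kaehler`). Wherever `g(q) ≠ 0`, the
  differentials of the fibre vanish and the fibre is reduced (`isReduced_of_annihilator_kaehler`).
-/

open MvPolynomial
open scoped TensorProduct

/-- Specialization of a polynomial in the variables `x₁,…,x_c,q₁,…,q_p` at a parameter
point `q ∈ ℂ^p`: substitute the coordinates of `q` for the `q`-variables, keeping the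
`x`-variables.  The `x`-variables are indexed by `Sum.inl`, the `q`-variables by
`Sum.inr`. -/
noncomputable def specializeAt {c p : ℕ} (q : Fin p → ℂ)
    (f : MvPolynomial (Fin c ⊕ Fin p) ℂ) : MvPolynomial (Fin c) ℂ :=
  aeval (Sum.elim X (fun j => C (q j))) f

/-- A finite reduced algebra over a perfect field is a finite product of finite (hence separable)
field extensions, so it is étale and in particular unramified. -/
theorem formallyUnramified_of_isReduced (K R : Type) [Field K] [PerfectField K] [CommRing R]
    [Algebra K R] [Module.Finite K R] [IsReduced R] : Algebra.FormallyUnramified K R := by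
  classical
  have : IsArtinianRing R := isArtinian_of_tower K inferInstance
  let := fun m : MaximalSpectrum R => Ideal.Quotient.field m.asIdeal
  have h : Algebra.FormallyEtale K R := by
    rw [Algebra.FormallyEtale.iff_exists_algEquiv_prod]
    exact ⟨MaximalSpectrum R, inferInstance, fun m => R ⧸ m.asIdeal, inferInstance, inferInstance,
      (IsArtinianRing.equivPi R).restrictScalars K, fun m => inferInstance⟩
  infer_instance

section
variable (A B K : Type) [CommRing A] [CommRing B] [Algebra A B] [Module.Finite A B]
  [Field K] [Algebra A K]

/-- If the fibre of a finite `A`-algebra `B` at a closed point `A ↠ K` is reduced, then some `g : A`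
not vanishing at that point kills `Ω[B⁄A]`: the base change of `Ω[B⁄A]` to `K` is zero, and
Nakayama's lemma applies. -/
theorem exists_annihilator_kaehler [PerfectField K] (hs : Function.Surjective (algebraMap A K))
    [IsReduced (K ⊗[A] B)] :
    ∃ g : A, algebraMap A K g ≠ 0 ∧ ∀ ω : Ω[B⁄A], g • ω = 0 := by
  let : Algebra B (K ⊗[A] B) := Algebra.TensorProduct.rightAlgebra
  have h := formallyUnramified_of_isReduced K (K ⊗[A] B)
  rw [Algebra.formallyUnramified_iff] at h
  have h1 : Subsingleton (K ⊗[A] Ω[B⁄A]) :=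
    (KaehlerDifferential.tensorKaehlerEquivBase A K B (K ⊗[A] B)).toEquiv.subsingleton
  let m := RingHom.ker (algebraMap A K)
  let e : (A ⧸ m) ≃ₗ[A] K := (Ideal.quotientKerAlgEquivOfSurjective (f := Algebra.ofId A K) hs).toLinearEquiv
  have h2 : Subsingleton (Ω[B⁄A] ⧸ (m • ⊤ : Submodule A Ω[B⁄A])) :=
    ((TensorProduct.quotTensorEquivQuotSMul (Ω[B⁄A]) m).symm ≪≫ₗ
      TensorProduct.congr e (LinearEquiv.refl A _)).toEquiv.subsingleton
  rw [Submodule.Quotient.subsingleton_iff] at h2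
  have : Module.Finite A Ω[B⁄A] := Module.Finite.trans B _
  obtain ⟨r, hr, hr'⟩ := Submodule.exists_sub_one_mem_and_smul_eq_zero_of_fg_of_le_smul m
    (⊤ : Submodule A Ω[B⁄A]) Module.Finite.fg_top h2.ge
  refine ⟨r, ?_, fun ω => hr' ω trivial⟩
  have : algebraMap A K r = 1 := by
    simpa [m, RingHom.mem_ker, sub_eq_zero] using hr
  simp [this]

/-- A `K`-point of `A` at which an annihilator of `Ω[B⁄A]` does not vanish has an unramified, hence
reduced, fibre. -/
theorem isReduced_of_annihilator_kaehler (g : A) (hg : algebraMap A K g ≠ 0)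
    (h : ∀ ω : Ω[B⁄A], g • ω = 0) : IsReduced (K ⊗[A] B) := by
  let : Algebra B (K ⊗[A] B) := Algebra.TensorProduct.rightAlgebra
  have h1 : Subsingleton (K ⊗[A] Ω[B⁄A]) := by
    refine subsingleton_of_forall_eq 0 fun z => ?_
    induction z with
    | zero => rfl
    | add x y hx hy => rw [hx, hy, add_zero]
    | tmul a ω =>
      have : a = g • ((algebraMap A K g)⁻¹ * a) := by
        rw [Algebra.smul_def, mul_inv_cancel_left₀ hg]
      rw [this, TensorProduct.smul_tmul, h, TensorProduct.tmul_zero]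
  have h2 : Algebra.FormallyUnramified K (K ⊗[A] B) := by
    rw [Algebra.formallyUnramified_iff]
    exact (KaehlerDifferential.tensorKaehlerEquivBase A K B
      (K ⊗[A] B)).symm.toEquiv.subsingleton
  exact Algebra.FormallyUnramified.isReduced_of_field K _
end

/-- The fibre of `A[x]/(F)` at a `K`-point of `A` is `K[x]` modulo the specialized equations. -/
theorem specialize_fiber_equiv {σ ι A K : Type} [CommRing A] [Field K] [Algebra A K]
    (F : ι → MvPolynomial σ A) (G : ι → MvPolynomial σ K)
    (hG : ∀ i, MvPolynomial.map (algebraMap A K) (F i) = G i) :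
    Nonempty (K ⊗[A] (MvPolynomial σ A ⧸ Ideal.span (Set.range F)) ≃+*
      MvPolynomial σ K ⧸ Ideal.span (Set.range G)) := by
  obtain rfl := funext hG
  refine ⟨(Algebra.TensorProduct.tensorQuotientEquiv (R := A) K
    (MvPolynomial σ A) K (Ideal.span (Set.range F))).toRingEquiv.trans
    (Ideal.quotientEquiv _ _ (algebraTensorAlgEquiv A K).toRingEquiv ?_)⟩
  rw [Ideal.map_span, Ideal.map_span, ← Set.range_comp, ← Set.range_comp]
  congr 2
  funext i
  simp

/-- A polynomial vanishing at `q = 0` lies in the ideal generated by the `q`-variables, so each of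
its monomials involves one of them. -/
theorem exists_inr_ne_zero_of_specializeAt_zero {c p : ℕ} {r : MvPolynomial (Fin c ⊕ Fin p) ℂ}
    (hr : specializeAt 0 r = 0) {s : Fin c ⊕ Fin p →₀ ℕ} (hs : s ∈ r.support) :
    ∃ j, s (Sum.inr j) ≠ 0 := by
  let Q : Ideal (MvPolynomial (Fin c ⊕ Fin p) ℂ) := Ideal.span (X '' Set.range Sum.inr)
  have h : (Ideal.Quotient.mkₐ ℂ Q).comp ((rename Sum.inl).comp
      (aeval (Sum.elim X (fun j => C ((0 : Fin p → ℂ) j))) :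
        MvPolynomial (Fin c ⊕ Fin p) ℂ →ₐ[ℂ] MvPolynomial (Fin c) ℂ)) =
      Ideal.Quotient.mkₐ ℂ Q := by
    ext i
    rcases i with i | j
    · simp
    · have : Ideal.Quotient.mk Q (X (Sum.inr j)) = 0 :=
        Ideal.Quotient.eq_zero_iff_mem.2 (Ideal.subset_span ⟨_, ⟨j, rfl⟩, rfl⟩)
      simp [this]
  have hrQ : r ∈ Q := by
    rw [← Ideal.Quotient.eq_zero_iff_mem]
    have h' := DFunLike.congr_fun h r
    have hr' : (aeval (Sum.elim X (fun j => C ((0 : Fin p → ℂ) j))) :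
        MvPolynomial (Fin c ⊕ Fin p) ℂ →ₐ[ℂ] MvPolynomial (Fin c) ℂ) r = 0 := hr
    simp only [AlgHom.comp_apply, hr', map_zero] at h'
    exact h'.symm
  obtain ⟨_, ⟨j, rfl⟩, hj⟩ := mem_ideal_span_X_image.1 hrQ s hs
  exact ⟨j, hj⟩

theorem monomial_eq_rename_mul_rename {c p : ℕ} (s : Fin c ⊕ Fin p →₀ ℕ) (a : ℂ) :
    monomial s a = rename Sum.inr (monomial (Finsupp.sumFinsuppEquivProdFinsupp s).2 a) *
      rename Sum.inl (monomial (Finsupp.sumFinsuppEquivProdFinsupp s).1 1) := by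
  rw [rename_monomial, rename_monomial, monomial_mul, mul_one]
  refine congrArg (fun t => monomial t a) ?_
  ext i
  rcases i with i | j
  · rw [Finsupp.add_apply, Finsupp.mapDomain_of_notMem_range _ _ (by simp),
      Finsupp.mapDomain_apply Sum.inl_injective, zero_add,
      Finsupp.fst_sumFinsuppEquivProdFinsupp]
  · rw [Finsupp.add_apply, Finsupp.mapDomain_apply Sum.inr_injective,
      Finsupp.mapDomain_of_notMem_range _ _ (by simp), add_zero,
      Finsupp.snd_sumFinsuppEquivProdFinsupp]

theorem weight_sumElim {c p : ℕ} (wx : Fin c → ℕ) (wq : Fin p → ℕ) (s : Fin c ⊕ Fin p →₀ ℕ) :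
    Finsupp.weight (Sum.elim wx wq) s =
      Finsupp.weight wx (Finsupp.sumFinsuppEquivProdFinsupp s).1 +
        Finsupp.weight wq (Finsupp.sumFinsuppEquivProdFinsupp s).2 := by
  simp [Finsupp.weight_apply, Finsupp.sum_fintype]

/-- Modulo an ideal of finite codimension, every polynomial is congruent to one whose monomials
have weight at most some uniform bound `D`. -/
theorem exists_weight_bound {c : ℕ} (wx : Fin c → ℕ) (I : Ideal (MvPolynomial (Fin c) ℂ))
    (hfin : FiniteDimensional ℂ (MvPolynomial (Fin c) ℂ ⧸ I)) :
    ∃ D : ℕ, ∀ h : MvPolynomial (Fin c) ℂ, ∃ v : MvPolynomial (Fin c) ℂ,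
      (∀ m ∈ v.support, Finsupp.weight wx m ≤ D) ∧ h - v ∈ I := by
  classical
  obtain ⟨S, hS⟩ := hfin.fg_top
  let l := Function.surjInv (Ideal.Quotient.mkₐ_surjective ℂ I)
  have hl : ∀ y, Ideal.Quotient.mkₐ ℂ I (l y) = y :=
    Function.surjInv_eq (Ideal.Quotient.mkₐ_surjective ℂ I)
  let D := S.sup fun y => (l y).weightedTotalDegree wx
  refine ⟨D, fun h => ?_⟩
  have key : (⊤ : Submodule ℂ (MvPolynomial (Fin c) ℂ ⧸ I)) ≤
      (restrictSupport ℂ {m | Finsupp.weight wx m ≤ D}).map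
        (Ideal.Quotient.mkₐ ℂ I).toLinearMap := by
    rw [← hS, Submodule.span_le]
    intro y hy
    refine ⟨l y, ?_, hl y⟩
    rw [SetLike.mem_coe, mem_restrictSupport_iff]
    intro m hm
    exact (le_weightedTotalDegree wx hm).trans
      (Finset.le_sup (f := fun y => (l y).weightedTotalDegree wx) hy)
  obtain ⟨v, hv, hvh⟩ := key (Submodule.mem_top (x := Ideal.Quotient.mkₐ ℂ I h))
  refine ⟨v, fun m hm => (mem_restrictSupport_iff ℂ).1 hv hm, ?_⟩
  rw [← Ideal.Quotient.eq]
  exact hvh.symm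

/-- Graded Nakayama: a quotient `ψ : ℂ[x,q] ↠ B` in which the `fᵢ` vanish is a finite
`ℂ[q]`-module, generated by the `x`-monomials of weight at most the bound `D` of
`exists_weight_bound`. -/
theorem finite_of_finite_special_fiber {c p : ℕ} (wx : Fin c → ℕ) (wq : Fin p → ℕ)
    (hwx : ∀ i, 0 < wx i) (hwq : ∀ j, 0 < wq j)
    (f : Fin c → MvPolynomial (Fin c ⊕ Fin p) ℂ) (d : Fin c → ℕ)
    (hhom : ∀ i, MvPolynomial.IsWeightedHomogeneous (Sum.elim wx wq) (f i) (d i))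
    (hfin : FiniteDimensional ℂ
      (MvPolynomial (Fin c) ℂ ⧸ Ideal.span (Set.range (fun i => specializeAt 0 (f i)))))
    {B : Type} [CommRing B] [Algebra (MvPolynomial (Fin p) ℂ) B]
    (ψ : MvPolynomial (Fin c ⊕ Fin p) ℂ →+* B) (hψ : Function.Surjective ψ)
    (hψf : ∀ i, ψ (f i) = 0)
    (hψA : ∀ a, ψ (rename Sum.inr a) = algebraMap (MvPolynomial (Fin p) ℂ) B a) :
    Module.Finite (MvPolynomial (Fin p) ℂ) B := by
  classical
  obtain ⟨D, hD⟩ := exists_weight_bound wx _ hfin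
  let T : Set (Fin c →₀ ℕ) := {m | Finsupp.weight wx m ≤ D}
  have hT : T.Finite := Finsupp.finite_of_nat_weight_le wx (fun i => (hwx i).ne') D
  let β : (Fin c →₀ ℕ) → B := fun m => ψ (rename Sum.inl (monomial m 1))
  let M : Submodule (MvPolynomial (Fin p) ℂ) B := Submodule.span _ (β '' T)
  have split : ∀ (s : Fin c ⊕ Fin p →₀ ℕ) (a : ℂ), 
      β (Finsupp.sumFinsuppEquivProdFinsupp s).1 ∈ M → ψ (monomial s a) ∈ M := by
    intro s a h
    rw [monomial_eq_rename_mul_rename, map_mul, hψA, ← Algebra.smul_def]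
    exact M.smul_mem _ h
  let I := Ideal.span (Set.range f)
  have hI : I ≤ RingHom.ker ψ := by
    rw [Ideal.span_le]
    rintro _ ⟨i, rfl⟩
    exact hψf i
  have hIhom : let := weightedGradedAlgebra ℂ (Sum.elim wx wq)
      I.IsHomogeneous (weightedHomogeneousSubmodule ℂ (Sum.elim wx wq)) := by
    let := weightedGradedAlgebra ℂ (Sum.elim wx wq)
    apply Ideal.homogeneous_span
    rintro _ ⟨i, rfl⟩
    exact ⟨d i, hhom i⟩
  have hM : ∀ n, ∀ m : Fin c →₀ ℕ, Finsupp.weight wx m = n → β m ∈ M := by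
    intro n
    induction n using Nat.strong_induction_on with
    | _ n ih =>
    intro m hm
    by_cases hn : n ≤ D
    · exact Submodule.subset_span ⟨m, by simpa [T, hm] using hn, rfl⟩
    obtain ⟨v, hv, hmv⟩ := hD (monomial m 1)
    let sp : MvPolynomial (Fin c ⊕ Fin p) ℂ →ₐ[ℂ] MvPolynomial (Fin c) ℂ :=
      aeval (Sum.elim X (fun j => C ((0 : Fin p → ℂ) j)))
    have hsp : ∀ h, sp (rename Sum.inl h) = h := by
      intro h
      simp only [sp, aeval_rename, Sum.elim_comp_inl, aeval_X_left, AlgHom.id_apply]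
    have hmap : Ideal.span (Set.range (fun i => specializeAt 0 (f i))) = I.map sp := by
      rw [Ideal.map_span, ← Set.range_comp]
      rfl
    rw [hmap, Ideal.mem_map_iff_of_surjective _ (fun h => ⟨_, hsp h⟩)] at hmv
    obtain ⟨y, hyI, hy⟩ := hmv
    -- Lift the congruence `x ^ m ≡ v` from `q = 0` to `x ^ m - v - r = y ∈ (f)`, where `r` vanishes
    -- at `q = 0`; the component of weight `n` then kills `v` and leaves `x ^ m ≡ rₙ` modulo `(f)`.
    obtain ⟨r, hr⟩ : ∃ r, r = rename Sum.inl (monomial m 1 - v) - y := ⟨_, rfl⟩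
    have hr0 : specializeAt 0 r = 0 := by
      change sp r = 0
      rw [hr, map_sub, hsp, hy, sub_self]
    have hmhom : IsWeightedHomogeneous (Sum.elim wx wq)
        (rename Sum.inl (monomial m (1 : ℂ)) : MvPolynomial (Fin c ⊕ Fin p) ℂ) n := by
      rw [rename_monomial]
      apply isWeightedHomogeneous_monomial
      rw [← hm, Finsupp.weight_apply, Finsupp.weight_apply,
        Finsupp.sum_mapDomain_index_inj Sum.inl_injective]
      simp
    have hvn : weightedHomogeneousComponent (Sum.elim wx wq) n
        (rename Sum.inl v : MvPolynomial (Fin c ⊕ Fin p) ℂ) = 0 := by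
      apply weightedHomogeneousComponent_eq_zero'
      intro s hs
      rw [support_rename_of_injective Sum.inl_injective] at hs
      obtain ⟨t, ht, rfl⟩ := Finset.mem_image.1 hs
      have := hv t ht
      rw [Finsupp.weight_apply, Finsupp.sum_mapDomain_index_inj Sum.inl_injective]
      rw [Finsupp.weight_apply] at this
      simp only [Sum.elim_inl]
      omega
    have hcomp := weightedHomogeneousComponent_mem_of_mem ℂ (Sum.elim wx wq) hIhom hyI n
    have hyr : y = rename Sum.inl (monomial m 1) - rename Sum.inl v - r := by
      rw [hr, map_sub]; ring
    rw [hyr, map_sub, map_sub, hvn, sub_zero, hmhom.weightedHomogeneousComponent_same] at hcomp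
    have hβ : β m = ψ (weightedHomogeneousComponent (Sum.elim wx wq) n r) := by
      have := hI hcomp
      rwa [RingHom.mem_ker, map_sub, sub_eq_zero] at this
    rw [hβ, weightedHomogeneousComponent_apply, map_sum]
    -- A term of `rₙ` has total weight `n` and involves a `q`-variable of positive weight, so its
    -- `x`-part has weight less than `n`.
    refine M.sum_mem fun s hs => split s _ (ih _ ?_ _ rfl)
    obtain ⟨hs, hsn⟩ := Finset.mem_filter.1 hs
    obtain ⟨j, hj⟩ := exists_inr_ne_zero_of_specializeAt_zero hr0 hs
    have hpos : 0 < Finsupp.weight wq (Finsupp.sumFinsuppEquivProdFinsupp s).2 := by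
      refine (hwq j).trans_le (Finsupp.le_weight_of_ne_zero' wq ?_)
      rwa [Finsupp.snd_sumFinsuppEquivProdFinsupp]
    rw [weight_sumElim] at hsn
    omega
  refine ⟨⟨(hT.image β).toFinset, ?_⟩⟩
  rw [Set.Finite.coe_toFinset, eq_top_iff]
  rintro b -
  obtain ⟨P, rfl⟩ := hψ b
  rw [P.as_sum, map_sum]
  exact M.sum_mem fun s _ => split s _ (hM _ _ rfl)

theorem sumAlgEquiv_rename_inr {c p : ℕ} (a : MvPolynomial (Fin p) ℂ) :
    sumAlgEquiv ℂ (Fin c) (Fin p) (rename Sum.inr a) = C a := by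
  have : ((sumAlgEquiv ℂ (Fin c) (Fin p)).toAlgHom.comp (rename Sum.inr)) =
      IsScalarTower.toAlgHom ℂ (MvPolynomial (Fin p) ℂ) _ := by
    ext j
    simp [MvPolynomial.algebraMap_eq]
  exact DFunLike.congr_fun this a

theorem map_eval_sumAlgEquiv {c p : ℕ} (q : Fin p → ℂ) (h : MvPolynomial (Fin c ⊕ Fin p) ℂ) :
    MvPolynomial.map (eval q) (sumAlgEquiv ℂ (Fin c) (Fin p) h) = specializeAt q h := by
  unfold specializeAt
  induction h using MvPolynomial.induction_on with
  | C a => simp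
  | add f g hf hg => rw [map_add, map_add, hf, hg, map_add]
  | mul_X f i hf =>
    rw [map_mul, map_mul, hf, map_mul]
    rcases i with i | j <;> simp

/-- If `f₁,…,f_c` are weighted-homogeneous polynomials in `x₁,…,x_c,q₁,…,q_p` (with
positive integer weights), the algebra `ℂ[x]/(f(x,0))` at `q = 0` is finite-dimensional,
and the specialized algebra `ℂ[x]/(f(x,q*))` is reduced (semisimple) at a single
parameter `q*`, then the specialized algebra is reduced for all generic `q ∈ ℂ^p`, i.e.
for all `q` in a nonempty Zariski-open subset of `ℂ^p` (the nonvanishing locus of a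
nonzero polynomial `g`). -/
theorem generic_semisimplicity_from_one_point
    (c p : ℕ) (hc : 1 ≤ c) (hp : 1 ≤ p)
    (wx : Fin c → ℕ) (wq : Fin p → ℕ)
    (hwx : ∀ i, 0 < wx i) (hwq : ∀ j, 0 < wq j)
    (f : Fin c → MvPolynomial (Fin c ⊕ Fin p) ℂ) (d : Fin c → ℕ)
    (hhom : ∀ i, MvPolynomial.IsWeightedHomogeneous (Sum.elim wx wq) (f i) (d i))
    (hfin : FiniteDimensional ℂ
      (MvPolynomial (Fin c) ℂ ⧸ Ideal.span (Set.range (fun i => specializeAt 0 (f i)))))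
    (qstar : Fin p → ℂ)
    (hred : IsReduced
      (MvPolynomial (Fin c) ℂ ⧸ Ideal.span (Set.range (fun i => specializeAt qstar (f i))))) :
    ∃ g : MvPolynomial (Fin p) ℂ, g ≠ 0 ∧
      ∀ q : Fin p → ℂ, eval q g ≠ 0 →
        IsReduced
          (MvPolynomial (Fin c) ℂ ⧸ Ideal.span (Set.range (fun i => specializeAt q (f i)))) := by
  let A := MvPolynomial (Fin p) ℂ
  let F : Fin c → MvPolynomial (Fin c) A := fun i => sumAlgEquiv ℂ (Fin c) (Fin p) (f i)
  let B := MvPolynomial (Fin c) A ⧸ Ideal.span (Set.range F)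
  let ψ : MvPolynomial (Fin c ⊕ Fin p) ℂ →+* B :=
    (Ideal.Quotient.mk (Ideal.span (Set.range F))).comp
      (sumAlgEquiv ℂ (Fin c) (Fin p)).toRingEquiv.toRingHom
  have hψ : Function.Surjective ψ :=
    Ideal.Quotient.mk_surjective.comp (sumAlgEquiv ℂ (Fin c) (Fin p)).surjective
  have hψf : ∀ i, ψ (f i) = 0 := fun i =>
    Ideal.Quotient.eq_zero_iff_mem.2 (Ideal.subset_span ⟨i, rfl⟩)
  have hψA : ∀ a : A, ψ (rename Sum.inr a) = algebraMap A B a := fun a =>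
    congrArg (Ideal.Quotient.mk (Ideal.span (Set.range F))) (sumAlgEquiv_rename_inr a)
  have hB := finite_of_finite_special_fiber (B := B) wx wq hwx hwq f d hhom hfin ψ hψ hψf hψA
  have fiber : ∀ q : Fin p → ℂ, let : Algebra A ℂ := (eval q).toAlgebra
      Nonempty (ℂ ⊗[A] B ≃+* MvPolynomial (Fin c) ℂ ⧸
        Ideal.span (Set.range (fun i => specializeAt q (f i)))) := by
    intro q
    let : Algebra A ℂ := (eval q).toAlgebra
    exact specialize_fiber_equiv F _ fun i => map_eval_sumAlgEquiv q (f i)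
  obtain ⟨g, hg, hann⟩ : ∃ g : A, eval qstar g ≠ 0 ∧ ∀ ω : Ω[B⁄A], g • ω = 0 := by
    let : Algebra A ℂ := (eval qstar).toAlgebra
    obtain ⟨e⟩ := fiber qstar
    have : IsReduced (ℂ ⊗[A] B) := isReduced_of_injective e e.injective
    exact exists_annihilator_kaehler A B ℂ (fun z => ⟨C z, eval_C z⟩)
  refine ⟨g, fun h => hg (by rw [h, map_zero]), fun q hq => ?_⟩
  let : Algebra A ℂ := (eval q).toAlgebra
  obtain ⟨e⟩ := fiber q
  have := isReduced_of_annihilator_kaehler A B ℂ g hq hann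
  exact isReduced_of_injective e.symm e.symm.injective
end

section
/- Let a₁, b₁, a₂, b₂ be complex numbers with b₁ ≠ 0 and b₂ ≠ 0. Then the quotient ring ℂ[E1,E2,H]/(E1·E2, E1² + a₁·E1·H + b₁·H², E2² + a₂·E2·H + b₂·H²) is a ℂ-vector space of dimension 8; moreover its graded pieces in degrees 0, 1, 2, 3 (where E1, E2, H all have degree 1) have dimensions 1, 3, 3, 1 respectively. (For suitable aᵢ, bᵢ this is the even cohomology ring, with degrees halved, of the blow-up of ℙ³ or of the quadric Q³ along two disjoint smooth rational curves, with E1, E2 the exceptional divisor classes and H the pullback of the hyperplane class.) -/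
/-!
The relations can be used as rewriting rules for `E1²` and `E2²`. Multiplying them by `E2` and
`E1` gives `b₁ E2 H² = 0` and `b₂ E1 H² = 0`, so, as `b₁` and `b₂` are nonzero, `E1 H²`, `E2 H²`
and then `H⁴` vanish in the quotient. Hence the eight monomials
`1, E1, E2, H, E1 H, E2 H, H², H³` span it (`mk_eq_sum_nf`).

For linear independence, the coordinates of the resulting normal form are written down as explicit
linear combinations of coefficients (`nf`). This linear map to `ℂ⁸` vanishes on the ideal
(`nf_relIdeal`) and sends the eight monomials to the standard basis (`nf_stdMon`). As it also
respects degrees (`nf_homogeneous`), the degree-`k` piece of the quotient has as a basis those of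
the eight monomials that have degree `k`.
-/


open MvPolynomial

set_option maxHeartbeats 1000000

/-- The degree-`k` graded piece of the quotient of `ℂ[E1,E2,H]` (graded with all three
variables of degree 1) by a homogeneous ideal `I`: the image in the quotient of the
space of homogeneous polynomials of degree `k`. -/
noncomputable def gradedPiece3 (I : Ideal (MvPolynomial (Fin 3) ℂ)) (k : ℕ) :
    Submodule ℂ (MvPolynomial (Fin 3) ℂ ⧸ I) :=
  Submodule.map (Ideal.Quotient.mkₐ ℂ I).toLinearMap (homogeneousSubmodule (Fin 3) ℂ k)

/-- The exponent vector of `E1 ^ i * E2 ^ j * H ^ k`. -/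
noncomputable def expo (i j k : ℕ) : Fin 3 →₀ ℕ := Finsupp.equivFunOnFinite.symm ![i, j, k]

/-- The coefficient of `E1 ^ i * E2 ^ j * H ^ k`, as a linear functional. -/
noncomputable def cf (i j k : ℕ) : MvPolynomial (Fin 3) ℂ →ₗ[ℂ] ℂ := lcoeff ℂ (expo i j k)

lemma cf_apply (i j k : ℕ) (p : MvPolynomial (Fin 3) ℂ) : cf i j k p = coeff (expo i j k) p := rfl

lemma eq_expo (m : Fin 3 →₀ ℕ) (i j k : ℕ) (h0 : m 0 = i) (h1 : m 1 = j) (h2 : m 2 = k) :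
    m = expo i j k := by
  ext t; fin_cases t <;> simp [expo, h0, h1, h2]

lemma cf_mul_X0 (i j k : ℕ) (p : MvPolynomial (Fin 3) ℂ) :
    cf (i + 1) j k (p * X 0) = cf i j k p := by
  have : expo (i + 1) j k = expo i j k + Finsupp.single 0 1 :=
    (eq_expo _ _ _ _ (by simp [expo]) (by simp [expo]) (by simp [expo])).symm
  rw [cf_apply, this, coeff_mul_X, cf_apply]

lemma cf_mul_X1 (i j k : ℕ) (p : MvPolynomial (Fin 3) ℂ) :
    cf i (j + 1) k (p * X 1) = cf i j k p := by
  have : expo i (j + 1) k = expo i j k + Finsupp.single 1 1 :=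
    (eq_expo _ _ _ _ (by simp [expo]) (by simp [expo]) (by simp [expo])).symm
  rw [cf_apply, this, coeff_mul_X, cf_apply]

lemma cf_mul_X2 (i j k : ℕ) (p : MvPolynomial (Fin 3) ℂ) :
    cf i j (k + 1) (p * X 2) = cf i j k p := by
  have : expo i j (k + 1) = expo i j k + Finsupp.single 2 1 :=
    (eq_expo _ _ _ _ (by simp [expo]) (by simp [expo]) (by simp [expo])).symm
  rw [cf_apply, this, coeff_mul_X, cf_apply]

lemma cf_mul_X0_zero (j k : ℕ) (p : MvPolynomial (Fin 3) ℂ) : cf 0 j k (p * X 0) = 0 := by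
  rw [cf_apply, coeff_mul_X', if_neg (by simp [expo])]

lemma cf_mul_X1_zero (i k : ℕ) (p : MvPolynomial (Fin 3) ℂ) : cf i 0 k (p * X 1) = 0 := by
  rw [cf_apply, coeff_mul_X', if_neg (by simp [expo])]

lemma cf_mul_X2_zero (i j : ℕ) (p : MvPolynomial (Fin 3) ℂ) : cf i j 0 (p * X 2) = 0 := by
  rw [cf_apply, coeff_mul_X', if_neg (by simp [expo])]

lemma cf_one_zero : cf 0 0 0 1 = 1 := by
  have : expo 0 0 0 = 0 := (eq_expo _ _ _ _ (by simp) (by simp) (by simp)).symm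
  rw [cf_apply, this, coeff_zero_one]

lemma cf_one (i j k : ℕ) (h : i + j + k ≠ 0) : cf i j k 1 = 0 := by
  rw [cf_apply, coeff_one, if_neg]
  intro h0
  have e0 := DFunLike.congr_fun h0 0
  have e1 := DFunLike.congr_fun h0 1
  have e2 := DFunLike.congr_fun h0 2
  simp [expo] at e0 e1 e2
  omega

lemma cf_homogeneous {p : MvPolynomial (Fin 3) ℂ} {n : ℕ} (hp : p.IsHomogeneous n) (i j k : ℕ)
    (h : i + j + k ≠ n) : cf i j k p = 0 := by
  rw [cf_apply]
  apply hp.coeff_eq_zero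
  simpa [Finsupp.degree_eq_sum, Fin.sum_univ_three, expo] using h

/-- The coordinates of the normal form of a polynomial modulo the ideal, with respect to the
standard monomials `stdMon`. They are read off from the rewriting rules
`E1² = -a₁ E1 H - b₁ H²` and `E2² = -a₂ E2 H - b₂ H²` together with their consequences
`E1 H² = E2 H² = 0`, `E1³ = a₁ b₁ H³` and `E2³ = a₂ b₂ H³`. -/
noncomputable def nf (a₁ b₁ a₂ b₂ : ℂ) : MvPolynomial (Fin 3) ℂ →ₗ[ℂ] (Fin 8 → ℂ) :=
  LinearMap.pi ![cf 0 0 0, cf 1 0 0, cf 0 1 0, cf 0 0 1,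
    cf 1 0 1 - a₁ • cf 2 0 0,
    cf 0 1 1 - a₂ • cf 0 2 0,
    cf 0 0 2 - b₁ • cf 2 0 0 - b₂ • cf 0 2 0,
    cf 0 0 3 - b₁ • cf 2 0 1 - b₂ • cf 0 2 1 + (a₁ * b₁) • cf 3 0 0 + (a₂ * b₂) • cf 0 3 0]

/-- The standard monomials, whose classes form a basis of the quotient. -/
noncomputable def stdMon : Fin 8 → MvPolynomial (Fin 3) ℂ :=
  ![1, 1 * X 0, 1 * X 1, 1 * X 2, 1 * X 0 * X 2, 1 * X 1 * X 2, 1 * X 2 * X 2,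
    1 * X 2 * X 2 * X 2]

/-- The degrees of the standard monomials. -/
def stdDeg : Fin 8 → ℕ := ![0, 1, 1, 1, 2, 2, 2, 3]

/-- The ideal of relations. -/
noncomputable def relIdeal (a₁ b₁ a₂ b₂ : ℂ) : Ideal (MvPolynomial (Fin 3) ℂ) :=
  Ideal.span
    { X 0 * X 1,
      X 0 ^ 2 + C a₁ * (X 0 * X 2) + C b₁ * X 2 ^ 2,
      X 1 ^ 2 + C a₂ * (X 1 * X 2) + C b₂ * X 2 ^ 2 }

section

variable (a₁ b₁ a₂ b₂ : ℂ)

lemma nf_apply (p : MvPolynomial (Fin 3) ℂ) : nf a₁ b₁ a₂ b₂ p =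
    ![cf 0 0 0 p, cf 1 0 0 p, cf 0 1 0 p, cf 0 0 1 p,
      cf 1 0 1 p - a₁ * cf 2 0 0 p,
      cf 0 1 1 p - a₂ * cf 0 2 0 p,
      cf 0 0 2 p - b₁ * cf 2 0 0 p - b₂ * cf 0 2 0 p,
      cf 0 0 3 p - b₁ * cf 2 0 1 p - b₂ * cf 0 2 1 p + (a₁ * b₁) * cf 3 0 0 p
        + (a₂ * b₂) * cf 0 3 0 p] := by
  ext i; fin_cases i <;> simp [nf]

lemma nf_stdMon (i : Fin 8) : nf a₁ b₁ a₂ b₂ (stdMon i) = Pi.single i 1 := by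
  rw [nf_apply]
  ext t
  fin_cases i <;> fin_cases t <;>
    simp [-one_mul, stdMon, cf_mul_X0 0, cf_mul_X0 1, cf_mul_X0 2, cf_mul_X1 _ 0, cf_mul_X1 _ 1,
      cf_mul_X1 _ 2, cf_mul_X2 _ _ 0, cf_mul_X2 _ _ 1, cf_mul_X2 _ _ 2, cf_mul_X0_zero,
      cf_mul_X1_zero, cf_mul_X2_zero, cf_one_zero, cf_one]

lemma stdMon_homogeneous (i : Fin 8) : (stdMon i).IsHomogeneous (stdDeg i) := by
  have h1 := isHomogeneous_one (Fin 3) ℂ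
  have hX := isHomogeneous_X ℂ (σ := Fin 3)
  fin_cases i
  · exact h1
  · exact h1.mul (hX 0)
  · exact h1.mul (hX 1)
  · exact h1.mul (hX 2)
  · exact (h1.mul (hX 0)).mul (hX 2)
  · exact (h1.mul (hX 1)).mul (hX 2)
  · exact (h1.mul (hX 2)).mul (hX 2)
  · exact ((h1.mul (hX 2)).mul (hX 2)).mul (hX 2)

/-- The normal form respects the grading. -/
lemma nf_homogeneous {p : MvPolynomial (Fin 3) ℂ} {n : ℕ} (hp : p.IsHomogeneous n) (i : Fin 8)
    (h : stdDeg i ≠ n) : nf a₁ b₁ a₂ b₂ p i = 0 := by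
  rw [nf_apply]
  fin_cases i <;> simp [stdDeg] at h ⊢ <;> simp [cf_homogeneous hp, h]

/-- The normal form vanishes on the ideal: by linearity this is checked on the products `r * g`
with `g` a generator, whose coefficients are shifted coefficients of `r`. -/
lemma nf_relIdeal {p : MvPolynomial (Fin 3) ℂ} (hp : p ∈ relIdeal a₁ b₁ a₂ b₂) :
    nf a₁ b₁ a₂ b₂ p = 0 := by
  unfold relIdeal Ideal.span at hp
  induction hp using Submodule.closure_induction with
  | zero => exact map_zero _
  | add x y _ _ hx hy => rw [map_add, hx, hy, add_zero]
  | smul_mem r x hx =>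
    have e1 : r * (X 0 * X 1) = r * X 0 * X 1 := by ring
    have e2 (a b : ℂ) : r * (X 0 ^ 2 + C a * (X 0 * X 2) + C b * X 2 ^ 2) =
        r * X 0 * X 0 + a • (r * X 0 * X 2) + b • (r * X 2 * X 2) := by
      simp only [smul_eq_C_mul]; ring
    have e3 (a b : ℂ) : r * (X 1 ^ 2 + C a * (X 1 * X 2) + C b * X 2 ^ 2) =
        r * X 1 * X 1 + a • (r * X 1 * X 2) + b • (r * X 2 * X 2) := by
      simp only [smul_eq_C_mul]; ring
    rw [smul_eq_mul, nf_apply]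
    rcases hx with rfl | rfl | rfl
    · rw [e1]
      ext t
      fin_cases t <;>
        simp [cf_mul_X1 _ 0, cf_mul_X1 _ 1, cf_mul_X1 _ 2, cf_mul_X0_zero, cf_mul_X1_zero]
    · rw [e2]
      ext t
      fin_cases t <;>
        simp [cf_mul_X0 0, cf_mul_X0 1, cf_mul_X0 2, cf_mul_X2 _ _ 0, cf_mul_X2 _ _ 1,
          cf_mul_X2 _ _ 2, cf_mul_X0_zero, cf_mul_X2_zero] <;> ring
    · rw [e3]
      ext t
      fin_cases t <;>
        simp [cf_mul_X1 _ 0, cf_mul_X1 _ 1, cf_mul_X1 _ 2, cf_mul_X2 _ _ 0, cf_mul_X2 _ _ 1,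
          cf_mul_X2 _ _ 2, cf_mul_X1_zero, cf_mul_X2_zero] <;> ring

/-- Modulo the ideal, every polynomial equals its normal form. The hypotheses `bᵢ ≠ 0` enter
here: they are what makes `E1 H²`, `E2 H²` and `H⁴` vanish in the quotient. -/
lemma mk_eq_sum_nf (hb₁ : b₁ ≠ 0) (hb₂ : b₂ ≠ 0) (p : MvPolynomial (Fin 3) ℂ) :
    Ideal.Quotient.mk (relIdeal a₁ b₁ a₂ b₂) p =
      ∑ i, nf a₁ b₁ a₂ b₂ p i • Ideal.Quotient.mk (relIdeal a₁ b₁ a₂ b₂) (stdMon i) := by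
  set π := Ideal.Quotient.mk (relIdeal a₁ b₁ a₂ b₂) with hπ
  have hsm (c : ℂ) (q : MvPolynomial (Fin 3) ℂ) : c • π q = π (C c) * π q := by
    rw [← map_mul, ← smul_eq_C_mul]; rfl
  have r1 : π (X 0) * π (X 1) = 0 := by
    rw [← map_mul]
    exact Ideal.Quotient.eq_zero_iff_mem.2 (Ideal.subset_span (by simp))
  have r2 : π (X 0) ^ 2 + π (C a₁) * (π (X 0) * π (X 2)) + π (C b₁) * π (X 2) ^ 2 = 0 := by
    simp only [← map_mul, ← map_pow, ← map_add]
    exact Ideal.Quotient.eq_zero_iff_mem.2 (Ideal.subset_span (by simp))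
  have r3 : π (X 1) ^ 2 + π (C a₂) * (π (X 1) * π (X 2)) + π (C b₂) * π (X 2) ^ 2 = 0 := by
    simp only [← map_mul, ← map_pow, ← map_add]
    exact Ideal.Quotient.eq_zero_iff_mem.2 (Ideal.subset_span (by simp))
  have i1 : π (C b₁⁻¹) * π (C b₁) = 1 := by
    rw [← map_mul, ← C_mul, inv_mul_cancel₀ hb₁, C_1, map_one]
  have i2 : π (C b₂⁻¹) * π (C b₂) = 1 := by
    rw [← map_mul, ← C_mul, inv_mul_cancel₀ hb₂, C_1, map_one]
  have r4 : π (X 0) * π (X 2) ^ 2 = 0 := by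
    linear_combination (-π (X 0) * π (X 2) ^ 2) * i2 + π (C b₂⁻¹) * π (X 0) * r3
      - π (C b₂⁻¹) * (π (X 1) + π (C a₂) * π (X 2)) * r1
  have r5 : π (X 1) * π (X 2) ^ 2 = 0 := by
    linear_combination (-π (X 1) * π (X 2) ^ 2) * i1 + π (C b₁⁻¹) * π (X 1) * r2
      - π (C b₁⁻¹) * (π (X 0) + π (C a₁) * π (X 2)) * r1
  have r6 : π (X 2) ^ 4 = 0 := by
    linear_combination (-π (X 2) ^ 4) * i1 + π (C b₁⁻¹) * π (X 2) ^ 2 * r2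
      - π (C b₁⁻¹) * (π (X 0) + π (C a₁) * π (X 2)) * r4
  induction p using MvPolynomial.induction_on with
  | C c =>
    have h1 : (C c : MvPolynomial (Fin 3) ℂ) = c • stdMon 0 := by
      rw [smul_eq_C_mul]; simp [stdMon]
    rw [h1, LinearMap.map_smul, nf_stdMon, smul_eq_C_mul, map_mul, ← hsm]
    simp [Pi.single_apply]
  | add p q hp hq => simp only [map_add, hp, hq, Pi.add_apply, add_smul, Finset.sum_add_distrib]
  | mul_X p i hp =>
    -- Multiplying the normal form of `p` by a variable and rewriting with the relations
    -- gives the normal form of the product.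
    rw [map_mul, hp]
    simp only [Fin.sum_univ_eight, hsm, nf_apply, stdMon]
    fin_cases i
    · simp [cf_mul_X0 0, cf_mul_X0 1, cf_mul_X0 2, cf_mul_X0_zero]
      linear_combination π (C (cf 1 0 0 p)) * r2 + π (C (cf 0 1 0 p)) * r1
        + (π (C (cf 0 1 1 p)) - π (C a₂) * π (C (cf 0 2 0 p))) * π (X 2) * r1
        + (π (C (cf 1 0 1 p)) - π (C a₁) * π (C (cf 2 0 0 p))) * (π (X 2) * r2 - π (C a₁) * r4) +
        (π (C (cf 0 0 2 p)) - π (C b₁) * π (C (cf 2 0 0 p)) - π (C b₂) * π (C (cf 0 2 0 p))) * r4 +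
        (π (C (cf 0 0 3 p)) - π (C b₁) * π (C (cf 2 0 1 p)) - π (C b₂) * π (C (cf 0 2 1 p))
        + π (C a₁) * π (C b₁) * π (C (cf 3 0 0 p)) + π (C a₂) * π (C b₂) * π (C (cf 0 3 0 p))) * π (X 2) * r4
    · simp [cf_mul_X1 _ 0, cf_mul_X1 _ 1, cf_mul_X1 _ 2, cf_mul_X1_zero]
      linear_combination π (C (cf 0 1 0 p)) * r3 + π (C (cf 1 0 0 p)) * r1
        + (π (C (cf 1 0 1 p)) - π (C a₁) * π (C (cf 2 0 0 p))) * π (X 2) * r1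
        + (π (C (cf 0 1 1 p)) - π (C a₂) * π (C (cf 0 2 0 p))) * (π (X 2) * r3 - π (C a₂) * r5) +
        (π (C (cf 0 0 2 p)) - π (C b₁) * π (C (cf 2 0 0 p)) - π (C b₂) * π (C (cf 0 2 0 p))) * r5 +
        (π (C (cf 0 0 3 p)) - π (C b₁) * π (C (cf 2 0 1 p)) - π (C b₂) * π (C (cf 0 2 1 p))
        + π (C a₁) * π (C b₁) * π (C (cf 3 0 0 p)) + π (C a₂) * π (C b₂) * π (C (cf 0 3 0 p))) * π (X 2) * r5
    · simp [cf_mul_X2 _ _ 0, cf_mul_X2 _ _ 1, cf_mul_X2 _ _ 2, cf_mul_X2_zero]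
      linear_combination (π (C (cf 1 0 1 p)) - π (C a₁) * π (C (cf 2 0 0 p))) * r4
        + (π (C (cf 0 1 1 p)) - π (C a₂) * π (C (cf 0 2 0 p))) * r5 +
        (π (C (cf 0 0 3 p)) - π (C b₁) * π (C (cf 2 0 1 p)) - π (C b₂) * π (C (cf 0 2 1 p))
        + π (C a₁) * π (C b₁) * π (C (cf 3 0 0 p)) + π (C a₂) * π (C b₂) * π (C (cf 0 3 0 p))) * r6

/-- The classes of the standard monomials are linearly independent, because the normal form
descends to the quotient and sends them to the standard basis of `ℂ⁸`. -/
lemma linearIndependent_stdMon : LinearIndependent ℂ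
    (fun i => Ideal.Quotient.mkₐ ℂ (relIdeal a₁ b₁ a₂ b₂) (stdMon i)) := by
  rw [Fintype.linearIndependent_iff]
  intro g hg
  have h1 : ∑ i, g i • stdMon i ∈ relIdeal a₁ b₁ a₂ b₂ := by
    rw [← Ideal.Quotient.eq_zero_iff_mem, ← Ideal.Quotient.mkₐ_eq_mk ℂ, map_sum]
    simpa only [map_smul] using hg
  have h2 := nf_relIdeal a₁ b₁ a₂ b₂ h1
  simp only [map_sum, map_smul, nf_stdMon] at h2
  intro i
  have := congrFun h2 i
  simpa [Finset.sum_apply, Pi.single_apply] using this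

lemma finrank_gradedPiece3_relIdeal (hb₁ : b₁ ≠ 0) (hb₂ : b₂ ≠ 0) (k : ℕ) :
    Module.finrank ℂ (gradedPiece3 (relIdeal a₁ b₁ a₂ b₂) k) =
      Fintype.card {i : Fin 8 // stdDeg i = k} := by
  have hspan : gradedPiece3 (relIdeal a₁ b₁ a₂ b₂) k =
      Submodule.span ℂ (Set.range fun i : {i : Fin 8 // stdDeg i = k} =>
        Ideal.Quotient.mkₐ ℂ (relIdeal a₁ b₁ a₂ b₂) (stdMon i)) := by
    apply le_antisymm
    · rintro _ ⟨p, hp, rfl⟩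
      change Ideal.Quotient.mk _ p ∈ _
      rw [mk_eq_sum_nf a₁ b₁ a₂ b₂ hb₁ hb₂]
      refine Submodule.sum_mem _ fun i _ => ?_
      by_cases h : stdDeg i = k
      · exact Submodule.smul_mem _ _ (Submodule.subset_span ⟨⟨i, h⟩, rfl⟩)
      · rw [nf_homogeneous _ _ _ _ hp i h, zero_smul]
        exact Submodule.zero_mem _
    · rw [Submodule.span_le]
      rintro _ ⟨⟨i, rfl⟩, rfl⟩
      exact ⟨stdMon i, stdMon_homogeneous i, rfl⟩
  rw [hspan]
  exact finrank_span_eq_card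
    ((linearIndependent_stdMon a₁ b₁ a₂ b₂).comp _ Subtype.val_injective)

lemma finrank_quotient_relIdeal (hb₁ : b₁ ≠ 0) (hb₂ : b₂ ≠ 0) :
    Module.finrank ℂ (MvPolynomial (Fin 3) ℂ ⧸ relIdeal a₁ b₁ a₂ b₂) = 8 := by
  have hspan : Submodule.span ℂ (Set.range fun i =>
      Ideal.Quotient.mkₐ ℂ (relIdeal a₁ b₁ a₂ b₂) (stdMon i)) = ⊤ := by
    rw [eq_top_iff]
    rintro x -
    obtain ⟨p, rfl⟩ := Ideal.Quotient.mk_surjective x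
    rw [mk_eq_sum_nf a₁ b₁ a₂ b₂ hb₁ hb₂]
    exact Submodule.sum_mem _ fun i _ =>
      Submodule.smul_mem _ _ (Submodule.subset_span ⟨i, rfl⟩)
  rw [← finrank_top ℂ, ← hspan, finrank_span_eq_card (linearIndependent_stdMon a₁ b₁ a₂ b₂),
    Fintype.card_fin]

end

/-- For complex numbers `a₁, b₁, a₂, b₂` with `b₁ ≠ 0` and `b₂ ≠ 0`, the ring
`ℂ[E1,E2,H]/(E1·E2, E1² + a₁·E1·H + b₁·H², E2² + a₂·E2·H + b₂·H²)` is a `ℂ`-vector space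
of dimension 8, and its graded pieces in degrees 0, 1, 2, 3 (with `E1 = X 0`,
`E2 = X 1`, `H = X 2`, all of degree 1) have dimensions 1, 3, 3, 1.  (For suitable
`aᵢ, bᵢ` this is the even cohomology ring, degrees halved, of the blow-up of `ℙ³` or
`Q³` along two disjoint smooth rational curves.) -/
theorem blowup_two_curves_cohomology_dims (a₁ b₁ a₂ b₂ : ℂ) (hb₁ : b₁ ≠ 0)
    (hb₂ : b₂ ≠ 0) :
    let I : Ideal (MvPolynomial (Fin 3) ℂ) :=
      Ideal.span
        { X 0 * X 1,
          X 0 ^ 2 + C a₁ * (X 0 * X 2) + C b₁ * X 2 ^ 2,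
          X 1 ^ 2 + C a₂ * (X 1 * X 2) + C b₂ * X 2 ^ 2 }
    Module.finrank ℂ (MvPolynomial (Fin 3) ℂ ⧸ I) = 8 ∧
    Module.finrank ℂ (gradedPiece3 I 0) = 1 ∧
    Module.finrank ℂ (gradedPiece3 I 1) = 3 ∧
    Module.finrank ℂ (gradedPiece3 I 2) = 3 ∧
    Module.finrank ℂ (gradedPiece3 I 3) = 1 := by
  intro I
  have hI : I = relIdeal a₁ b₁ a₂ b₂ := rfl
  rw [hI]
  refine ⟨finrank_quotient_relIdeal a₁ b₁ a₂ b₂ hb₁ hb₂, ?_, ?_, ?_, ?_⟩ <;>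
    rw [finrank_gradedPiece3_relIdeal a₁ b₁ a₂ b₂ hb₁ hb₂] <;> decide
end
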